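/- arXiv:2308.14209 — 8 statements merged into one kernel-verified Lean document; each statement's English description precedes it below -/
import Mathlib

section
/- Let p be a prime such that p − 1 is a power of 2 (i.e., p is a Fermat prime). Then there is no nontrivial difference set in the cyclic group ZMod p: every difference set D in the additive group ZMod p satisfies |D| ≤ 1 or |D| ≥ p − 1. -/
/-- A subset `D` of the additive group `ZMod p` is a difference set with parameter `lam`
(a positive integer) if every nonzero `g : ZMod p` has exactly `lam` representations
`g = d₂ - d₁` with `d₁, d₂ ∈ D`. -/
def IsDiffSetZMod (p : ℕ) (D : Finset (ZMod p)) (lam : ℕ) : Prop :=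
  0 < lam ∧ ∀ g : ZMod p, g ≠ 0 →
    ((D ×ˢ D).filter (fun x => x.2 - x.1 = g)).card = lam

/-- If `p` is a Fermat prime (i.e. `p - 1` is a power of `2`), then there is no nontrivial
difference set in the cyclic group `ZMod p`. -/
theorem no_nontrivial_diff_set_fermat (p : ℕ) (hp : p.Prime)
    (hfermat : ∃ s : ℕ, p - 1 = 2 ^ s)
    (D : Finset (ZMod p)) (lam : ℕ) (hD : IsDiffSetZMod p D lam) :
    D.card ≤ 1 ∨ p - 1 ≤ D.card := by
  classical
  obtain ⟨s, hs⟩ := hfermat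
  obtain ⟨-, h⟩ := hD
  haveI : Fact p.Prime := ⟨hp⟩
  have hoff : D.offDiag.card = (p - 1) * lam := by
    have h1 := Finset.card_eq_sum_card_fiberwise (s := D.offDiag)
      (t := (Finset.univ : Finset (ZMod p)).erase 0) (f := fun x => x.2 - x.1)
      (by
        intro x hx
        have hx' := Finset.mem_offDiag.1 hx
        simp only [Finset.coe_erase, Finset.coe_univ, Set.mem_diff, Set.mem_univ,
          Set.mem_singleton_iff, true_and]
        exact fun h0 => hx'.2.2 (sub_eq_zero.1 h0).symm)
    rw [h1, Finset.sum_congr rfl (g := fun _ => lam)]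
    · simp [Finset.card_erase_of_mem, ZMod.card]
    · intro g hg
      have hg0 : g ≠ 0 := (Finset.mem_erase.1 hg).1
      rw [← h g hg0]
      congr 1
      ext x
      simp only [Finset.mem_filter, Finset.mem_offDiag, Finset.mem_product]
      constructor
      · rintro ⟨⟨a, b, -⟩, d⟩
        exact ⟨⟨a, b⟩, d⟩
      · rintro ⟨⟨a, b⟩, d⟩
        refine ⟨⟨a, b, fun he => hg0 ?_⟩, d⟩
        rw [← d, he, sub_self]
  rw [Finset.offDiag_card] at hoff
  by_cases hk : D.card ≤ 1
  · exact Or.inl hk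
  right
  obtain ⟨m, hm⟩ : ∃ m, D.card = m + 1 := ⟨D.card - 1, by omega⟩
  rw [hm] at hoff hk ⊢
  have hmul : (m + 1) * m = 2 ^ s * lam := by
    rw [← hs, ← hoff, Nat.mul_succ, Nat.add_sub_cancel]
  have hdvd : 2 ^ s ∣ (m + 1) * m := ⟨lam, hmul⟩
  have hor : 2 ^ s ∣ m + 1 ∨ 2 ^ s ∣ m := by
    rcases Nat.even_or_odd m with he | ho
    · right
      exact Nat.Coprime.dvd_of_dvd_mul_left
        (Nat.Coprime.pow_left s (Nat.coprime_two_left.2 he.add_one)) hdvd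
    · left
      exact Nat.Coprime.dvd_of_dvd_mul_right
        (Nat.Coprime.pow_left s (Nat.coprime_two_left.2 ho)) hdvd
  rw [hs]
  rcases hor with h1 | h1
  · exact Nat.le_of_dvd (by omega) h1
  · exact (Nat.le_of_dvd (by omega) h1).trans (Nat.le_succ m)
end

section
/- Let q > 3 be a prime such that p = 4q + 1 is also prime. Then there is no nontrivial difference set in the cyclic group ZMod p: every difference set D in the additive group ZMod p satisfies |D| ≤ 1 or |D| ≥ p − 1. -/
open NumberField
open scoped Pointwise

theorem cyc_package_aux (p : ℕ) [hp : Fact p.Prime] (K : Type) [Field K] [NumberField K]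
    [IsCyclotomicExtension {p} ℚ K] [IsGalois ℚ K] :
    ∃ (O : Type) (_ : CommRing O) (_ : IsDedekindDomain O) (_ : CharZero O)
      (_ : MulSemiringAction (ZMod p)ˣ O) (e : AddChar (ZMod p) O),
      e ≠ 1 ∧ (∀ (u : (ZMod p)ˣ) x, u • e x = e (u * x)) ∧
      (∀ b : O, (∀ u : (ZMod p)ˣ, u • b = b) → ∃ a : ℤ, (a : O) = b) ∧
      (∀ (r : ℕ) (_ : r.Prime) (hrp : r.Coprime p) (P : Ideal O), P.IsPrime → (r : O) ∈ P →
        ∀ u ∈ Subgroup.zpowers (ZMod.unitOfCoprime r hrp), u • P = P) := by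
  have hζK := IsCyclotomicExtension.zeta_spec p ℚ K
  have hζ : IsPrimitiveRoot hζK.toInteger p := hζK.toInteger_isPrimitiveRoot
  let φ := IsCyclotomicExtension.Rat.galEquivZMod p K
  let act : MulSemiringAction (ZMod p)ˣ (𝓞 K) :=
    MulSemiringAction.compHom (𝓞 K) φ.symm.toMonoidHom
  have hact : ∀ (u : (ZMod p)ˣ) (x : 𝓞 K), u • x = φ.symm u • x := fun _ _ => rfl
  refine ⟨𝓞 K, inferInstance, inferInstance, inferInstance, act,
    AddChar.zmodChar p hζ.pow_eq_one, ?_, ?_, ?_, ?_⟩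
  · have := AddChar.zmodChar_primitive_of_primitive_root p hζ
    intro h
    have h2 := this (a := 1) one_ne_zero
    apply h2
    rw [AddChar.mulShift_one]
    exact h
  · intro u x
    rw [hact, AddChar.zmodChar_apply, AddChar.zmodChar_apply, smul_pow',
      IsCyclotomicExtension.Rat.galEquivZMod_smul_of_pow_eq p K _ hζ.pow_eq_one, ← pow_mul]
    rw [show IsCyclotomicExtension.Rat.galEquivZMod p K (φ.symm u) = u from φ.apply_symm_apply u]
    rw [ZMod.val_mul, ← pow_eq_pow_mod _ hζ.pow_eq_one]
  · intro b hb
    obtain ⟨a, ha⟩ := Algebra.IsInvariant.isInvariant (A := ℤ) (G := Gal(K/ℚ)) b (fun g => by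
      have := hb (φ g)
      rwa [hact, φ.symm_apply_apply] at this)
    exact ⟨a, by simpa using ha⟩
  · intro r hr hrp P hP hrP u hu
    have : Fact r.Prime := ⟨hr⟩
    have hP0 : P ≠ ⊥ := by
      rintro rfl
      rw [Ideal.mem_bot] at hrP
      exact hr.ne_zero (by exact_mod_cast hrP)
    have hmax : P.IsMaximal := hP.isMaximal hP0
    have hlo : P.LiesOver (Ideal.span {(r : ℤ)}) := by
      constructor
      have h1 : (Ideal.span {(r : ℤ)}).IsMaximal :=
        Int.ideal_span_isMaximal_of_prime r
      refine h1.eq_of_le ?_ ?_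
      · exact (Ideal.IsPrime.under ℤ P).ne_top
      · rw [Ideal.span_singleton_le_iff_mem, Ideal.mem_comap]
        simpa using hrP
    have h := IsCyclotomicExtension.Rat.galEquivZMod_stabilizer p K r P hrp
    rw [← h] at hu
    have hu' : ∃ σ ∈ MulAction.stabilizer Gal(K/ℚ) P, φ σ = u := by
      exact hu
    obtain ⟨σ, hσ, rfl⟩ := hu'
    have h3 : φ σ • P = φ.symm (φ σ) • P := rfl
    rw [h3, φ.symm_apply_apply]
    exact hσ

theorem cyc_package (p : ℕ) [hp : Fact p.Prime] :
    ∃ (O : Type) (_ : CommRing O) (_ : IsDedekindDomain O) (_ : CharZero O)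
      (_ : MulSemiringAction (ZMod p)ˣ O) (e : AddChar (ZMod p) O),
      e ≠ 1 ∧ (∀ (u : (ZMod p)ˣ) x, u • e x = e (u * x)) ∧
      (∀ b : O, (∀ u : (ZMod p)ˣ, u • b = b) → ∃ a : ℤ, (a : O) = b) ∧
      (∀ (r : ℕ) (_ : r.Prime) (hrp : r.Coprime p) (P : Ideal O), P.IsPrime → (r : O) ∈ P →
        ∀ u ∈ Subgroup.zpowers (ZMod.unitOfCoprime r hrp), u • P = P) := by
  have : NeZero ((p : ℕ) : ℚ) := ⟨by exact_mod_cast hp.out.ne_zero⟩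
  have : IsCyclotomicExtension {p} ℚ (CyclotomicField p ℚ) :=
    CyclotomicField.isCyclotomicExtension p ℚ
  have : IsGalois ℚ (CyclotomicField p ℚ) := IsCyclotomicExtension.isGalois {p} ℚ _
  exact cyc_package_aux p (CyclotomicField p ℚ)

theorem enat_add_self {a b : ℕ∞} (h : a + a = b + b) : a = b := by
  rcases lt_trichotomy a b with h1 | h1 | h1
  · have := ENat.add_lt_add_of_lt_of_le (ne_top_of_lt h1) h1 h1.le
    exact absurd h this.ne
  · exact h1
  · have := ENat.add_lt_add_of_lt_of_le (ne_top_of_lt h1) h1 h1.le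
    exact absurd h this.ne'

/-- valuations are Galois-equivariant -/
theorem emult_smul {G O : Type*} [Group G] [CommRing O] [IsDedekindDomain O]
    [MulSemiringAction G O] (u : G) (P : Ideal O) (x : O) :
    emultiplicity (u • P) (Ideal.span {u • x}) = emultiplicity P (Ideal.span {x}) := by
  rw [emultiplicity_eq_emultiplicity_iff]
  intro n
  rw [Ideal.dvd_span_singleton, Ideal.dvd_span_singleton, ← smul_pow',
    Ideal.smul_mem_pointwise_smul_iff]

theorem dvd_of_emult {O : Type*} [CommRing O] [IsDedekindDomain O] (a b : O)
    (ha : a ≠ 0) (hb : b ≠ 0)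
    (h : ∀ P : Ideal O, P.IsPrime → P ≠ ⊥ → a ∈ P →
      emultiplicity P (Ideal.span {a}) ≤ emultiplicity P (Ideal.span {b})) : a ∣ b := by
  classical
  rw [← Ideal.span_singleton_le_span_singleton, ← Ideal.dvd_iff_le]
  have ha' : Ideal.span {a} ≠ 0 := by simpa using ha
  have hb' : Ideal.span {b} ≠ 0 := by simpa using hb
  rw [UniqueFactorizationMonoid.dvd_iff_normalizedFactors_le_normalizedFactors ha' hb',
    Multiset.le_iff_count]
  intro P
  by_cases hP : P ∈ UniqueFactorizationMonoid.normalizedFactors (Ideal.span {a})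
  · have hpr := UniqueFactorizationMonoid.prime_of_normalized_factor P hP
    have hd := UniqueFactorizationMonoid.dvd_of_mem_normalizedFactors hP
    have := h P (Ideal.isPrime_of_prime hpr) hpr.ne_zero (Ideal.dvd_span_singleton.1 hd)
    rw [UniqueFactorizationMonoid.emultiplicity_eq_count_normalizedFactors hpr.irreducible ha',
      UniqueFactorizationMonoid.emultiplicity_eq_count_normalizedFactors hpr.irreducible hb',
      normalize_eq] at this
    exact_mod_cast this
  · rw [Multiset.count_eq_zero_of_notMem hP]
    exact Nat.zero_le _

/-- The key divisibility. -/
theorem key_dvd {G O : Type*} [CommGroup G] [CommRing O] [IsDedekindDomain O]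
    [MulSemiringAction G O] (c t : G) (θ : O) (n : ℕ) (hn : (n : O) ≠ 0)
    (hθ : θ * (c • θ) = n)
    (hP : ∀ P : Ideal O, P.IsPrime → (n : O) ∈ P → t • P = P ∨ c • P = P) :
    (n : O) ∣ (t • θ) * (c • θ) := by
  have hθ0 : θ ≠ 0 := by rintro rfl; simp at hθ; exact hn hθ.symm
  have hcθ0 : c • θ ≠ 0 := by intro h; rw [h] at hθ; simp at hθ; exact hn hθ.symm
  have htθ0 : t • θ ≠ 0 := by rwa [Ne, smul_eq_zero_iff_eq]
  refine dvd_of_emult _ _ hn (mul_ne_zero htθ0 hcθ0) ?_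
  intro P hPp hP0 hnP
  have key : ∀ Q : Ideal O, Q.IsPrime → Q ≠ ⊥ → emultiplicity Q (Ideal.span {(n : O)}) =
      emultiplicity Q (Ideal.span {θ}) + emultiplicity Q (Ideal.span {c • θ}) := by
    intro Q hQ hQ0
    rw [← hθ, ← Ideal.span_singleton_mul_span_singleton,
      emultiplicity_mul (Ideal.prime_of_isPrime hQ0 hQ)]
  rw [← Ideal.span_singleton_mul_span_singleton,
      emultiplicity_mul (Ideal.prime_of_isPrime hP0 hPp), key P hPp hP0]
  refine le_of_eq ?_
  congr 1
  rcases hP P hPp hnP with h | h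
  · conv_rhs => rw [← h]
    rw [emult_smul]
  · have h1 : emultiplicity P (Ideal.span {c • θ}) = emultiplicity P (Ideal.span {θ}) := by
      conv_lhs => rw [← h]
      rw [emult_smul]
    have h2 : c • (t⁻¹ • P) = t⁻¹ • P := by rw [smul_comm, h]
    have h3 : emultiplicity (t⁻¹ • P) (Ideal.span {c • θ}) =
        emultiplicity (t⁻¹ • P) (Ideal.span {θ}) := by
      conv_lhs => rw [← h2]
      rw [emult_smul]
    have h4 : emultiplicity P (Ideal.span {t • θ}) =
        emultiplicity (t⁻¹ • P) (Ideal.span {θ}) := by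
      rw [← emult_smul t (t⁻¹ • P), smul_inv_smul]
    have h5 : emultiplicity P (Ideal.span {(n : O)}) =
        emultiplicity (t⁻¹ • P) (Ideal.span {(n : O)}) := by
      rw [← emult_smul t (t⁻¹ • P), smul_inv_smul,
        show t • (n : O) = n from map_natCast (MulSemiringAction.toRingHom G O t) n]
    have hQ0 : t⁻¹ • P ≠ ⊥ := by
      intro h
      apply hP0
      rw [← smul_inv_smul t P, h]
      simp
    have hQp : (t⁻¹ • P).IsPrime := inferInstance
    rw [key P hPp hP0, key _ hQp hQ0, h1, h3, ← h4] at h5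
    exact enat_add_self h5

theorem sum_units_char {p : ℕ} [hp : Fact p.Prime] {O : Type*} [CommRing O] [IsDomain O]
    (e : AddChar (ZMod p) O) (he : e ≠ 1) (a : ZMod p) :
    ∑ u : (ZMod p)ˣ, e (u * a) = if a = 0 then (p : O) - 1 else -1 := by
  have h1 := AddChar.sum_mulShift a (AddChar.IsPrimitive.of_ne_one he)
  have h2 : ∑ x, e (x * a) = e (0 * a) + ∑ u : (ZMod p)ˣ, e (u * a) := by
    rw [← Finset.add_sum_erase _ _ (Finset.mem_univ (0 : ZMod p))]
    congr 1
    symm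
    refine Finset.sum_bij (fun u _ => (u : ZMod p)) ?_ ?_ ?_ ?_
    · intro u _; simp
    · intro u _ v _ h; exact Units.ext h
    · intro x hx
      exact ⟨Units.mk0 x (Finset.ne_of_mem_erase hx), Finset.mem_univ _, rfl⟩
    · intro u _; rfl
  rw [h2] at h1
  simp only [zero_mul, AddChar.map_zero_eq_one] at h1
  have h3 := eq_sub_of_add_eq' h1
  rw [h3]
  split_ifs <;> simp [ZMod.card]

theorem diffset_card {p : ℕ} [hp : Fact p.Prime] (D : Finset (ZMod p)) (lam : ℕ)
    (hD : ∀ g : ZMod p, g ≠ 0 → ((D ×ˢ D).filter (fun x => x.2 - x.1 = g)).card = lam) :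
    D.card * D.card = D.card + lam * (p - 1) := by
  have h := Finset.card_eq_sum_card_fiberwise (s := D ×ˢ D) (t := Finset.univ)
    (f := fun x => x.2 - x.1) (by intro x _; simp)
  rw [Finset.card_product, ← Finset.add_sum_erase _ _ (Finset.mem_univ (0 : ZMod p))] at h
  rw [Finset.sum_congr rfl (fun g hg => hD g (Finset.ne_of_mem_erase hg))] at h
  have h0 : ((D ×ˢ D).filter (fun x => x.2 - x.1 = 0)).card = D.card := by
    rw [← Finset.diag_card D]
    congr 1
    ext ⟨a, b⟩
    simp [sub_eq_zero]
    grind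
  rw [h0] at h
  simp [ZMod.card] at h
  rw [h]
  ring

theorem diffset_theta {p : ℕ} [hp : Fact p.Prime] {O : Type*} [CommRing O] [IsDomain O]
    [MulSemiringAction (ZMod p)ˣ O]
    (e : AddChar (ZMod p) O) (he : e ≠ 1) (hs : ∀ (u : (ZMod p)ˣ) x, u • e x = e (u * x))
    (D : Finset (ZMod p)) (lam : ℕ)
    (hD : ∀ g : ZMod p, g ≠ 0 → ((D ×ˢ D).filter (fun x => x.2 - x.1 = g)).card = lam) :
    (∑ d ∈ D, e d) * ((-1 : (ZMod p)ˣ) • ∑ d ∈ D, e d) = (D.card : O) - lam := by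
  have h1 : (∑ d ∈ D, e d) * ((-1 : (ZMod p)ˣ) • ∑ d ∈ D, e d) =
      ∑ x ∈ D ×ˢ D, e (x.2 - x.1) := by
    rw [Finset.smul_sum, mul_comm, Finset.sum_mul_sum, ← Finset.sum_product']
    refine Finset.sum_congr rfl fun x _ => ?_
    rw [hs, ← AddChar.map_add_eq_mul]
    congr 1
    simp
    ring
  have h0 : ((D ×ˢ D).filter (fun x => x.2 - x.1 = 0)).card = D.card := by
    rw [← Finset.diag_card D]
    congr 1
    ext ⟨a, b⟩
    simp [sub_eq_zero]
    grind
  rw [h1, ← Finset.sum_fiberwise (D ×ˢ D) (fun x => x.2 - x.1)]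
  have h2 : ∀ g : ZMod p, ∑ x ∈ (D ×ˢ D).filter (fun x => x.2 - x.1 = g), e (x.2 - x.1) =
      ((D ×ˢ D).filter (fun x => x.2 - x.1 = g)).card * e g := by
    intro g
    rw [Finset.sum_congr rfl (fun x hx => by rw [(Finset.mem_filter.1 hx).2])]
    simp
  simp_rw [h2]
  have h3 : ∑ g, e g = 0 := AddChar.sum_eq_zero_of_ne_one he
  rw [← Finset.add_sum_erase _ _ (Finset.mem_univ (0 : ZMod p))] at h3 ⊢
  rw [Finset.sum_congr rfl (fun g hg => by rw [hD g (Finset.ne_of_mem_erase hg)]),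
    ← Finset.mul_sum, eq_neg_of_add_eq_zero_right h3, h0]
  simp
  ring

theorem int_dvd {G O : Type*} [Group G] [CommRing O] [IsDomain O] [CharZero O]
    [MulSemiringAction G O]
    (hinv : ∀ b : O, (∀ u : G, u • b = b) → ∃ a : ℤ, (a : O) = b)
    (n m : ℤ) (hn : n ≠ 0) (h : (n : O) ∣ m) : n ∣ m := by
  obtain ⟨w, hw⟩ := h
  have hn' : (n : O) ≠ 0 := by exact_mod_cast hn
  have hz : ∀ (u : G) (z : ℤ), u • (z : O) = z :=
    fun u z => map_intCast (MulSemiringAction.toRingHom G O u) z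
  obtain ⟨a, rfl⟩ := hinv w (fun u => by
    have h2 := congrArg (fun y => u • y) hw
    simp only [smul_mul', hz] at h2
    rw [hw] at h2
    exact (mul_left_cancel₀ hn' h2).symm)
  exact ⟨a, by exact_mod_cast hw⟩

theorem multiplier {p : ℕ} [hp : Fact p.Prime] {O : Type*} [CommRing O] [IsDomain O] [CharZero O]
    [MulSemiringAction (ZMod p)ˣ O]
    (e : AddChar (ZMod p) O) (he : e ≠ 1) (hs : ∀ (u : (ZMod p)ˣ) x, u • e x = e (u * x))
    (hinv : ∀ b : O, (∀ u : (ZMod p)ˣ, u • b = b) → ∃ a : ℤ, (a : O) = b)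
    (D : Finset (ZMod p)) (lam n : ℕ) (hn : D.card = lam + n) (hlam : lam < n) (hnp : n < p)
    (hc : D.card * D.card = D.card + lam * (p - 1)) (t : (ZMod p)ˣ)
    (hdvd : (n : O) ∣ (t • ∑ d ∈ D, e d) * ((-1 : (ZMod p)ˣ) • ∑ d ∈ D, e d)) :
    ∃ g : ZMod p, ∀ d ∈ D, t * d - g ∈ D := by
  set N : ZMod p → ℕ := fun g => ((D ×ˢ D).filter (fun x => t * x.1 - x.2 = g)).card with hN
  have h1 : (t • ∑ d ∈ D, e d) * ((-1 : (ZMod p)ˣ) • ∑ d ∈ D, e d) =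
      ∑ x ∈ D ×ˢ D, e (t * x.1 - x.2) := by
    rw [Finset.smul_sum, Finset.smul_sum, Finset.sum_mul_sum, ← Finset.sum_product']
    refine Finset.sum_congr rfl fun x _ => ?_
    rw [hs, hs, ← AddChar.map_add_eq_mul]
    congr 1
    simp
    ring
  have hp1 : 1 ≤ p := hp.out.one_le
  have hcong : ∀ g, (n : ℤ) ∣ (N g : ℤ) - lam := by
    intro g
    have h2 : (n : O) ∣ ∑ u : (ZMod p)ˣ, u • ((∑ x ∈ D ×ˢ D, e (t * x.1 - x.2)) * e (-g)) := by
      refine Finset.dvd_sum fun u _ => ?_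
      obtain ⟨w, hw⟩ := hdvd
      rw [← h1, hw]
      refine ⟨u • (w * e (-g)), ?_⟩
      rw [mul_assoc, smul_mul']
      congr 1
      exact map_natCast (MulSemiringAction.toRingHom _ O u) n
    have h3 : ∑ u : (ZMod p)ˣ, u • ((∑ x ∈ D ×ˢ D, e (t * x.1 - x.2)) * e (-g)) =
        ((p * N g - D.card * D.card : ℤ) : O) := by
      simp_rw [Finset.sum_mul, Finset.smul_sum, ← AddChar.map_add_eq_mul, hs]
      rw [Finset.sum_comm]
      simp_rw [sum_units_char e he]
      have : ∀ x : ZMod p × ZMod p, (if t * x.1 - x.2 + -g = 0 then (p : O) - 1 else -1) =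
          (p : O) * (if t * x.1 - x.2 = g then 1 else 0) - 1 := by
        intro x
        have : t * x.1 - x.2 + -g = 0 ↔ t * x.1 - x.2 = g := by
          rw [← sub_eq_add_neg, sub_eq_zero]
        simp only [this]
        split_ifs <;> simp
      simp_rw [this]
      rw [Finset.sum_sub_distrib, ← Finset.mul_sum, Finset.sum_boole]
      simp [hN]
    rw [h3] at h2
    have h4 := int_dvd hinv (n : ℤ) (p * N g - D.card * D.card) (by omega)
      (by rw [Int.cast_natCast]; exact h2)
    have h5 : (p * N g - D.card * D.card : ℤ) = p * (N g - lam) - n := by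
      have : (D.card : ℤ) * D.card = D.card + lam * (p - 1) := by
        have := congrArg (fun z : ℕ => (z : ℤ)) hc
        push_cast [hp1] at this
        exact this
      rw [this, hn]
      push_cast
      ring
    rw [h5] at h4
    have h6 : (n : ℤ) ∣ p * (N g - lam) := by
      have := dvd_add h4 (dvd_refl (n : ℤ))
      simpa using this
    refine IsCoprime.dvd_of_dvd_mul_left ?_ h6
    rw [Nat.isCoprime_iff_coprime]
    exact ((Nat.Prime.coprime_iff_not_dvd hp.out).2
      (Nat.not_dvd_of_pos_of_lt (by omega) hnp)).symm
  have hge : ∀ g, lam ≤ N g := by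
    intro g
    by_contra hlt
    push Not at hlt
    have h2 : (n : ℤ) ∣ lam - N g := by
      have := hcong g
      rwa [← dvd_neg, neg_sub] at this
    have := Int.le_of_dvd (by omega) h2
    omega
  have hsum : ∑ g, N g = D.card * D.card := by
    rw [← Finset.card_product]
    exact (Finset.card_eq_sum_card_fiberwise (s := D ×ˢ D) (t := Finset.univ)
      (f := fun x => (t : ZMod p) * x.1 - x.2) (by intro x _; simp)).symm
  obtain ⟨g, hg⟩ : ∃ g, lam < N g := by
    by_contra hcon
    push Not at hcon
    have : ∑ g, N g ≤ ∑ g : ZMod p, lam := Finset.sum_le_sum fun g _ => hcon g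
    rw [hsum, hc, hn] at this
    simp [ZMod.card] at this
    obtain ⟨m, rfl⟩ : ∃ m, p = m + 1 := ⟨p - 1, by omega⟩
    simp at this
    nlinarith
  refine ⟨g, ?_⟩
  have hNg : D.card ≤ N g := by
    have h2 := hcong g
    have := Int.le_of_dvd (by omega) h2
    omega
  have hsub : D = ((D ×ˢ D).filter (fun x => t * x.1 - x.2 = g)).image Prod.fst := by
    symm
    apply Finset.eq_of_subset_of_card_le
    · intro d hd
      simp at hd
      exact hd.choose_spec.1.1
    · rw [Finset.card_image_of_injOn]
      · exact hNg
      · rintro ⟨a, b⟩ hx ⟨a', b'⟩ hy hxy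
        simp at hx hy hxy
        subst hxy
        have := hx.2.trans hy.2.symm
        simp at this
        simp [this]
  intro d hd
  rw [hsub] at hd
  simp at hd
  obtain ⟨b, ⟨_, h3⟩, h4⟩ := hd
  rw [← h4]
  simpa using h3

theorem quartic_periods {p q : ℕ} [hp : Fact p.Prime] (hq : q.Prime) (hq3 : 3 < q)
    (hpq : p = 4 * q + 1) {O : Type*} [CommRing O] [IsDomain O] [CharZero O]
    [MulSemiringAction (ZMod p)ˣ O]
    (e : AddChar (ZMod p) O) (he : e ≠ 1) (hs : ∀ (u : (ZMod p)ˣ) x, u • e x = e (u * x))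
    (hinv : ∀ b : O, (∀ u : (ZMod p)ˣ, u • b = b) → ∃ a : ℤ, (a : O) = b) (x y : O)
    (hx : x = ∑ h ∈ Finset.univ.filter (fun h : ZMod p => h ^ q = 1), e h)
    (hy : y = (-1 : (ZMod p)ˣ) • x) :
    ∃ (s z w : O) (g : (ZMod p)ˣ), s ^ 2 = p ∧ 2 * (x + y) + 1 = s ∧ 2 * (z + w) + 1 = -s ∧
      g • x = z ∧ g • y = w ∧ g • z = y ∧ g • w = x ∧ g • s = -s ∧
      ∀ b : O, g • b = b → ∃ a : ℤ, (a : O) = b := by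
  have hodd : Odd q := hq.odd_of_ne_two (by omega)
  obtain ⟨g, hg⟩ := IsCyclic.exists_generator (α := (ZMod p)ˣ)
  have hord : orderOf g = 4 * q := by
    rw [orderOf_eq_card_of_forall_mem_zpowers hg, Nat.card_eq_fintype_card, ZMod.card_units, hpq]
    rfl
  set E : ZMod p → O := fun a => ∑ h ∈ Finset.univ.filter (fun h : ZMod p => h ^ q = a), e h
    with hE
  have hact : ∀ (u : (ZMod p)ˣ) a, u • E a = E (u ^ q * a) := by
    intro u a
    simp only [hE]
    rw [Finset.smul_sum]
    refine Finset.sum_bij (fun h _ => u * h) ?_ ?_ ?_ ?_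
    · intro h hh
      simp at hh ⊢
      rw [mul_pow, hh]
    · intro h _ h' _ hh
      simpa using hh
    · intro b hb
      simp at hb
      refine ⟨((u⁻¹ : (ZMod p)ˣ) : ZMod p) * b, Finset.mem_filter.2 ⟨Finset.mem_univ _, ?_⟩,
        Units.mul_inv_cancel_left u b⟩
      rw [mul_pow, hb, ← mul_assoc, ← mul_pow, Units.inv_mul, one_pow, one_mul]
    · intro h _
      rw [hs]
  set i : ZMod p := (g : ZMod p) ^ q with hi
  have hi2 : i * i = -1 := by
    have h1 : (i * i) * (i * i) = 1 := by
      have : g ^ (4 * q) = 1 := by rw [← hord]; exact pow_orderOf_eq_one g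
      have h2 := congrArg (fun u : (ZMod p)ˣ => (u : ZMod p)) this
      simp only [Units.val_pow_eq_pow_val, Units.val_one] at h2
      rw [← h2, hi]
      ring
    rcases mul_self_eq_one_iff.1 h1 with h | h
    · exfalso
      have h2 : g ^ (2 * q) = 1 := by
        apply Units.ext
        simp only [Units.val_pow_eq_pow_val, Units.val_one]
        rw [← h, hi]
        ring
      have := orderOf_dvd_of_pow_eq_one h2
      rw [hord] at this
      have := Nat.le_of_dvd (by omega) this
      omega
    · exact h
  have hF2 : (2 : ZMod p) ≠ 0 := by
    intro h
    have : ((2 : ℕ) : ZMod p) = 0 := by exact_mod_cast h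
    rw [ZMod.natCast_eq_zero_iff] at this
    have := Nat.le_of_dvd (by omega) this
    omega
  have hne1 : (1 : ZMod p) ≠ -1 := by
    intro h
    apply hF2
    linear_combination h
  have hx' : x = E 1 := hx
  have hy' : y = E (-1) := by
    rw [hy, hx', hact]
    simp [hodd.neg_one_pow]
  have hrc : ringChar (ZMod p) ≠ 2 := by
    rw [ZMod.ringChar_zmod_n]; omega
  -- coefficients
  have hcoef : ∀ h : ZMod p,
      ((if h ^ q = 1 then (1 : O) else 0) + (if h ^ q = -1 then 1 else 0) +
        (if h ^ q = i then 1 else 0) + (if h ^ q = -i then 1 else 0) = if h = 0 then 0 else 1) ∧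
      ((if h ^ q = 1 then (1 : O) else 0) + (if h ^ q = -1 then 1 else 0) -
        (if h ^ q = i then 1 else 0) - (if h ^ q = -i then 1 else 0) =
          ((quadraticChar (ZMod p) h : ℤ) : O)) := by
    intro h
    have hi0 : i ≠ 0 := by intro h; rw [h] at hi2; simp at hi2
    by_cases h0 : h = 0
    · subst h0
      simp [hq.ne_zero, hi0, hi0.symm]
    have hchi : ((quadraticChar (ZMod p) h : ℤ) : ZMod p) = h ^ q * h ^ q := by
      rw [quadraticChar_eq_pow_of_char_ne_two' hrc, ZMod.card, ← pow_add]
      congr 1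
      omega
    have hdi := quadraticChar_dichotomy h0
    have h4 : (h ^ q * h ^ q) * (h ^ q * h ^ q) = 1 := by
      have h41 := ZMod.pow_card_sub_one_eq_one h0
      rw [show p - 1 = 4 * q by omega] at h41
      rw [← h41]
      ring
    have e1 : (1 : ZMod p) ≠ i := by
      intro h; rw [← h] at hi2; exact hne1 (by simpa using hi2)
    have e2 : (1 : ZMod p) ≠ -i := by
      intro h
      have : i = -1 := by rw [h, neg_neg]
      rw [this] at hi2; exact hne1 (by simpa using hi2)
    have e3 : (-1 : ZMod p) ≠ i := by
      intro h
      rw [← h] at hi2; exact hne1 (by simpa using hi2)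
    have e4 : (-1 : ZMod p) ≠ -i := fun h => e1 (neg_injective h)
    have e5 : i ≠ -i := by
      intro h
      have : 2 * i = 0 := by linear_combination h
      exact (mul_ne_zero hF2 hi0) this
    rcases mul_self_eq_one_iff.1 h4 with h5 | h5
    · have hc : quadraticChar (ZMod p) h = 1 := by
        rcases hdi with hd | hd
        · exact hd
        · rw [hd, h5] at hchi
          exact absurd (by simpa using hchi.symm) hne1
      rcases mul_self_eq_one_iff.1 h5 with h6 | h6 <;>
        simp [h6, h0, hc, e1, e2, e3, e4, hne1, hne1.symm]
    · have hc : quadraticChar (ZMod p) h = -1 := by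
        rcases hdi with hd | hd
        · rw [hd, h5] at hchi
          exact absurd (by simpa using hchi) hne1
        · exact hd
      have h7 : h ^ q * h ^ q = i * i := by rw [h5, hi2]
      rcases mul_self_eq_mul_self_iff.1 h7 with h6 | h6 <;>
        simp [h6, h0, hc, e1.symm, e2.symm, e3.symm, e4.symm, e5, e5.symm, -neg_inj]
  have hEsum : ∀ a, E a = ∑ h, (if h ^ q = a then (1 : O) else 0) * e h := by
    intro a
    simp [hE, Finset.sum_filter]
  have hsum1 : E 1 + E (-1) + E i + E (-i) = -1 := by
    simp only [hEsum]
    rw [← Finset.sum_add_distrib, ← Finset.sum_add_distrib, ← Finset.sum_add_distrib]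
    simp_rw [← add_mul, (hcoef _).1]
    have h3 : ∑ g, e g = 0 := AddChar.sum_eq_zero_of_ne_one he
    rw [← Finset.add_sum_erase _ _ (Finset.mem_univ (0 : ZMod p))] at h3 ⊢
    rw [Finset.sum_congr rfl (fun g hg => by rw [if_neg (Finset.ne_of_mem_erase hg), one_mul]),
      eq_neg_of_add_eq_zero_right h3]
    simp
  set χ : MulChar (ZMod p) O := (quadraticChar (ZMod p)).ringHomComp (Int.castRingHom O) with hχ
  have hsum2 : E 1 + E (-1) - E i - E (-i) = gaussSum χ e := by
    simp only [hEsum]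
    rw [← Finset.sum_add_distrib, ← Finset.sum_sub_distrib, ← Finset.sum_sub_distrib]
    simp_rw [← add_mul, ← sub_mul, (hcoef _).2]
    rfl
  have hgs : gaussSum χ e ^ 2 = p := by
    rw [gaussSum_sq]
    · rw [hχ, MulChar.ringHomComp_apply, quadraticChar_neg_one hrc, ZMod.card,
        ZMod.χ₄_nat_one_mod_four (by omega)]
      simp
    · rw [hχ]
      exact (MulChar.ringHomComp_ne_one_iff (RingHom.injective_int _)).2
        (quadraticChar_ne_one hrc)
    · exact (quadraticChar_isQuadratic (ZMod p)).comp _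
    · exact AddChar.IsPrimitive.of_ne_one he
  have g1 : g • x = E i := by rw [hx', hact, mul_one]
  have g2 : g • y = E (-i) := by rw [hy', hact]; congr 1; rw [hi]; ring
  have g3 : g • E i = y := by rw [hact, hy', ← hi2]
  have g4 : g • E (-i) = x := by
    rw [hact, hx']; congr 1; linear_combination -hi2
  rw [← hx', ← hy'] at hsum1 hsum2
  refine ⟨2 * (x + y) + 1, E i, E (-i), g, ?_, rfl, ?_, g1, g2, g3, g4, ?_, ?_⟩
  · rw [← hgs, ← hsum2]
    congr 1
    linear_combination hsum1
  · linear_combination 2 * hsum1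
  · have h2 : g • (2 : O) = 2 := map_ofNat (MulSemiringAction.toRingHom _ O g) 2
    rw [smul_add, smul_mul', smul_add, smul_one, g1, g2, h2]
    linear_combination 2 * hsum1
  · intro b hb
    apply hinv
    intro u
    have h1 : g ∈ MulAction.stabilizer (ZMod p)ˣ b := hb
    have h2 : Subgroup.zpowers g ≤ MulAction.stabilizer (ZMod p)ˣ b := by
      rwa [Subgroup.zpowers_le]
    exact h2 (hg u)

theorem quartic_int {p q : ℕ} [hp : Fact p.Prime] (hq : q.Prime) (hq3 : 3 < q)
    (hpq : p = 4 * q + 1) {O : Type*} [CommRing O] [IsDomain O] [CharZero O]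
    [MulSemiringAction (ZMod p)ˣ O]
    (e : AddChar (ZMod p) O) (he : e ≠ 1) (hs : ∀ (u : (ZMod p)ˣ) x, u • e x = e (u * x))
    (hinv : ∀ b : O, (∀ u : (ZMod p)ˣ, u • b = b) → ∃ a : ℤ, (a : O) = b) (x y : O)
    (hx : x = ∑ h ∈ Finset.univ.filter (fun h : ZMod p => h ^ q = 1), e h)
    (hy : y = (-1 : (ZMod p)ˣ) • x) (n : ℕ) :
    (4 * n = 3 * q + 1 → x * y = n → False) ∧
    (4 * n = 3 * q + 3 → (1 + x) * (1 + y) = n → False) := by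
  obtain ⟨s, z, w, g, hs2, hsx, hsz, g1, g2, g3, g4, g5, hfix⟩ :=
    quartic_periods hq hq3 hpq e he hs hinv x y hx hy
  have hB : g • ((x - y) * (z - w) * s) = (x - y) * (z - w) * s := by
    rw [smul_mul', smul_mul', smul_sub, smul_sub, g1, g2, g3, g4, g5]
    ring
  obtain ⟨b, hb⟩ := hfix _ hB
  have hpz : Prime (p : ℤ) := Nat.prime_iff_prime_int.1 hp.out
  have hp0 : (p : ℤ) ≠ 0 := hpz.ne_zero
  have hgn : g • (n : O) = n := map_natCast (MulSemiringAction.toRingHom _ O g) n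
  have hpO : (p : O) = 4 * q + 1 := by rw [hpq]; push_cast; ring
  have red : ∀ m : ℤ, b ^ 2 = p ^ 2 * m → ∃ c : ℤ, c ^ 2 = m := by
    intro m hm
    have : (p : ℤ) ∣ b := hpz.dvd_of_dvd_pow (n := 2) ⟨p * m, by rw [hm]; ring⟩
    obtain ⟨c, rfl⟩ := this
    refine ⟨c, ?_⟩
    have : (p : ℤ) ^ 2 * c ^ 2 = p ^ 2 * m := by rw [← hm]; ring
    exact mul_left_cancel₀ (pow_ne_zero 2 hp0) this
  have h16 : (16 : O) ≠ 0 := by norm_num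
  constructor
  · intro hn hxy
    have hnO : 4 * (n : O) = 3 * q + 1 := by exact_mod_cast hn
    have hzw : z * w = n := by
      have := congrArg (fun v => g • v) hxy
      simpa only [smul_mul', g1, g2, hgn] using this
    have hb2 : b ^ 2 = p ^ 2 * (q : ℤ) := by
      have : ((b ^ 2 : ℤ) : O) = ((p ^ 2 * (q : ℤ) : ℤ) : O) := by
        apply mul_left_cancel₀ h16
        push_cast
        rw [hb]
        have a1 : 4 * (x - y) ^ 2 = (s - 1) ^ 2 - 4 * (3 * q + 1) := by
          rw [← hsx, ← hnO, ← hxy]; ring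
        have a2 : 4 * (z - w) ^ 2 = (-s - 1) ^ 2 - 4 * (3 * q + 1) := by
          rw [← hsz, ← hnO, ← hzw]; ring
        have a3 : 16 * ((x - y) * (z - w) * s) ^ 2 =
            (4 * (x - y) ^ 2) * (4 * (z - w) ^ 2) * s ^ 2 := by ring
        rw [a3, a1, a2]
        have a4 : ((s - 1) ^ 2 - 4 * (3 * q + 1)) * ((-s - 1) ^ 2 - 4 * (3 * q + 1)) =
          (s ^ 2 + 1 - 4 * (3 * (q : O) + 1)) ^ 2 - 4 * s ^ 2 := by ring
        rw [a4, hs2, hpO]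
        ring
      exact_mod_cast this
    obtain ⟨c, hc⟩ := red _ hb2
    have hqz : Prime (q : ℤ) := Nat.prime_iff_prime_int.1 hq
    exact hqz.irreducible.not_isSquare ⟨c, by rw [← hc]; ring⟩
  · intro hn hxy
    have hnO : 4 * (n : O) = 3 * q + 3 := by exact_mod_cast hn
    have hzw : (1 + z) * (1 + w) = n := by
      have := congrArg (fun v => g • v) hxy
      simpa only [smul_mul', smul_add, smul_one, g1, g2, hgn] using this
    have hb2 : b ^ 2 = p ^ 2 * ((q : ℤ) - 2) := by
      have : ((b ^ 2 : ℤ) : O) = ((p ^ 2 * ((q : ℤ) - 2) : ℤ) : O) := by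
        apply mul_left_cancel₀ h16
        push_cast
        rw [hb]
        have a1 : 4 * (x - y) ^ 2 = (s + 3) ^ 2 - 4 * (3 * q + 3) := by
          rw [← hsx, ← hnO, ← hxy]; ring
        have a2 : 4 * (z - w) ^ 2 = (-s + 3) ^ 2 - 4 * (3 * q + 3) := by
          rw [← hsz, ← hnO, ← hzw]; ring
        have a3 : 16 * ((x - y) * (z - w) * s) ^ 2 =
            (4 * (x - y) ^ 2) * (4 * (z - w) ^ 2) * s ^ 2 := by ring
        rw [a3, a1, a2]
        have a4 : ((s + 3) ^ 2 - 4 * (3 * q + 3)) * ((-s + 3) ^ 2 - 4 * (3 * q + 3)) =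
          (s ^ 2 + 9 - 4 * (3 * (q : O) + 3)) ^ 2 - 36 * s ^ 2 := by ring
        rw [a4, hs2, hpO]
        ring
      exact_mod_cast this
    obtain ⟨c, hc⟩ := red _ hb2
    have h3 : ¬ 3 ∣ q := by
      intro h
      have := (Nat.prime_dvd_prime_iff_eq Nat.prime_three hq).1 h
      omega
    have h3p : ¬ 3 ∣ p := by
      intro h
      have := (Nat.prime_dvd_prime_iff_eq Nat.prime_three hp.out).1 h
      omega
    have : c % 3 = 0 ∨ c % 3 = 1 ∨ c % 3 = 2 := by omega
    have hc3 : c ^ 2 % 3 = 0 ∨ c ^ 2 % 3 = 1 := by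
      rcases this with h | h | h <;> simp [pow_two, Int.mul_emod, h]
    omega

theorem mem_zpowers_of_orderOf_dvd {G : Type*} [Group G] [Finite G] [IsCyclic G] (x y : G)
    (h : orderOf x ∣ orderOf y) : x ∈ Subgroup.zpowers y := by
  classical
  have := Fintype.ofFinite G
  have h1 : (Finset.univ.filter (fun a : G => a ^ orderOf y = 1)).card ≤ orderOf y :=
    IsCyclic.card_pow_eq_one_le (orderOf_pos y)
  have h2 : Finset.univ.filter (fun a : G => a ∈ Subgroup.zpowers y) ⊆
      Finset.univ.filter (fun a : G => a ^ orderOf y = 1) := by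
    intro a ha
    simp only [Finset.mem_filter, Finset.mem_univ, true_and] at ha ⊢
    obtain ⟨k, rfl⟩ := ha
    rw [← orderOf_dvd_iff_pow_eq_one]
    exact orderOf_dvd_of_mem_zpowers ⟨k, rfl⟩
  have h3 : (Finset.univ.filter (fun a : G => a ∈ Subgroup.zpowers y)).card = orderOf y := by
    rw [← Nat.card_zpowers, Nat.card_eq_fintype_card, ← Fintype.card_subtype]
  have h4 := Finset.eq_of_subset_of_card_le h2 (by rw [h3]; exact h1)
  have h5 : x ∈ Finset.univ.filter (fun a : G => a ^ orderOf y = 1) := by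
    simp [← orderOf_dvd_iff_pow_eq_one, h]
  rw [← h4] at h5
  simpa using h5

theorem exists_prime_mem {O : Type*} [CommRing O] (P : Ideal O) (hP : P.IsPrime) (n : ℕ)
    (hn : n ≠ 0) (h : (n : O) ∈ P) : ∃ r : ℕ, r.Prime ∧ r ∣ n ∧ (r : O) ∈ P := by
  induction n using Nat.strong_induction_on with
  | _ n ih =>
    have h1 : n ≠ 1 := by
      rintro rfl
      rw [Nat.cast_one] at h
      exact hP.ne_top ((Ideal.eq_top_iff_one P).2 h)
    obtain ⟨m, hm⟩ := Nat.minFac_dvd n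
    have hpr := Nat.minFac_prime h1
    rw [hm, Nat.cast_mul] at h
    rcases hP.mem_or_mem h with h2 | h2
    · exact ⟨n.minFac, hpr, Nat.minFac_dvd n, h2⟩
    · have hm0 : m ≠ 0 := by rintro rfl; simp at hm; exact hn hm
      have hlt : m < n := by
        have := hpr.two_le
        nlinarith [Nat.pos_of_ne_zero hm0]
      obtain ⟨r, hr, hrm, hrP⟩ := ih m hlt hm0 h2
      exact ⟨r, hr, hrm.trans ⟨n.minFac, by rw [mul_comm]; exact hm⟩, hrP⟩

theorem frob_cases {p q : ℕ} [hp : Fact p.Prime] (hq : q.Prime) (hq3 : 3 < q)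
    (hpq : p = 4 * q + 1) (t : (ZMod p)ˣ) (ht : orderOf t = q) (r : ℕ) (hr : r.Prime)
    (hrp : r < p) (hc : r.Coprime p) :
    t ∈ Subgroup.zpowers (ZMod.unitOfCoprime r hc) ∨
      (-1) ∈ Subgroup.zpowers (ZMod.unitOfCoprime r hc) := by
  have hd : orderOf (ZMod.unitOfCoprime r hc) ∣ 4 * q := by
    have := orderOf_dvd_card (x := ZMod.unitOfCoprime r hc)
    rw [ZMod.card_units, show p - 1 = 4 * q by omega] at this
    exact this
  by_cases h : q ∣ orderOf (ZMod.unitOfCoprime r hc)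
  · left
    exact mem_zpowers_of_orderOf_dvd _ _ (by rwa [ht])
  · right
    have hcop : Nat.Coprime (orderOf (ZMod.unitOfCoprime r hc)) q :=
      ((Nat.Prime.coprime_iff_not_dvd hq).2 h).symm
    have h4 := hcop.dvd_of_dvd_mul_right hd
    have hne : orderOf (ZMod.unitOfCoprime r hc) ≠ 1 := by
      intro h1
      rw [orderOf_eq_one_iff] at h1
      have h2 := congrArg (fun u : (ZMod p)ˣ => (u : ZMod p)) h1
      simp only [ZMod.coe_unitOfCoprime, Units.val_one] at h2
      have h3 : ((r : ℕ) : ZMod p) = ((1 : ℕ) : ZMod p) := by rw [h2, Nat.cast_one]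
      rw [ZMod.natCast_eq_natCast_iff'] at h3
      rw [Nat.mod_eq_of_lt hrp, Nat.mod_eq_of_lt hp.out.one_lt] at h3
      exact hr.one_lt.ne' h3
    apply mem_zpowers_of_orderOf_dvd
    have h5 : orderOf (-1 : (ZMod p)ˣ) ∣ 2 := orderOf_dvd_of_pow_eq_one (by simp)
    refine h5.trans ?_
    have h6 : orderOf (ZMod.unitOfCoprime r hc) ≤ 4 := Nat.le_of_dvd (by norm_num) h4
    generalize orderOf (ZMod.unitOfCoprime r hc) = o at *
    interval_cases o <;> simp_all

theorem diffset_core {p q : ℕ} [hp : Fact p.Prime] (hq : q.Prime) (hq3 : 3 < q)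
    (hpq : p = 4 * q + 1) (D : Finset (ZMod p)) (lam : ℕ)
    (hD : ∀ g : ZMod p, g ≠ 0 → ((D ×ˢ D).filter (fun x => x.2 - x.1 = g)).card = lam)
    (hk2 : 2 ≤ D.card) (hk : D.card ≤ 2 * q) : False := by
  have hc := diffset_card D lam hD
  -- the parameters
  have hpar : (D.card = q ∧ q = 4 * lam + 1) ∨ (D.card = q + 1 ∧ q + 1 = 4 * lam) := by
    have hc' := hc
    rw [show p - 1 = 4 * q by omega] at hc'
    obtain ⟨j, hj⟩ : ∃ j, D.card = j + 1 := ⟨D.card - 1, by omega⟩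
    rw [hj] at hc' hk hk2
    have hjj : (j + 1) * j = q * (4 * lam) := by nlinarith
    have hq0 : 0 < q := by omega
    rcases (Nat.Prime.dvd_mul hq).1 ⟨_, hjj⟩ with ⟨m, hm⟩ | ⟨m, hm⟩
    · have hm1 : m ≤ 2 := by
        by_contra h
        have : q * 3 ≤ q * m := Nat.mul_le_mul_left _ (by omega)
        omega
      have hm0 : m ≠ 0 := by rintro rfl; simp at hm
      rw [hm, mul_assoc] at hjj
      have hjj' := Nat.eq_of_mul_eq_mul_left hq0 hjj
      obtain rfl | rfl : m = 1 ∨ m = 2 := by omega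
      · left; omega
      · omega
    · have hm1 : m < 2 := by
        by_contra h
        have : q * 2 ≤ q * m := Nat.mul_le_mul_left _ (by omega)
        omega
      have hm0 : m ≠ 0 := by rintro rfl; simp at hm; omega
      obtain rfl : m = 1 := by omega
      rw [mul_one] at hm
      subst hm
      right
      rw [mul_comm] at hjj
      have hjj' := Nat.eq_of_mul_eq_mul_left hq0 hjj
      omega
  obtain ⟨n, hn⟩ : ∃ n, D.card = lam + n := ⟨D.card - lam, by omega⟩
  have hlam : lam < n := by omega
  have hnp : n < p := by omega
  obtain ⟨O, _, _, _, _, e, he, hs, hinv, hfrob⟩ := cyc_package p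
  -- the multiplier
  obtain ⟨γ, hγ⟩ := IsCyclic.exists_ofOrder_eq_natCard (α := (ZMod p)ˣ)
  rw [Nat.card_eq_fintype_card, ZMod.card_units, show p - 1 = 4 * q by omega] at hγ
  obtain ⟨t, ht⟩ : ∃ t : (ZMod p)ˣ, orderOf t = q := ⟨γ ^ 4, by
    rw [orderOf_pow_of_dvd (by norm_num) (by rw [hγ]; exact ⟨q, rfl⟩), hγ]
    omega⟩
  have hθ := diffset_theta e he hs D lam hD
  have hθ' : (∑ d ∈ D, e d) * ((-1 : (ZMod p)ˣ) • ∑ d ∈ D, e d) = (n : O) := by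
    rw [hθ, hn]; push_cast; ring
  have hn0 : (n : O) ≠ 0 := by
    have : n ≠ 0 := by omega
    exact_mod_cast this
  have hdvd := key_dvd (-1 : (ZMod p)ˣ) t _ n hn0 hθ' (by
    intro P hP hnP
    obtain ⟨r, hr, hrn, hrP⟩ := exists_prime_mem P hP n (by omega) hnP
    have hrlt : r < p := lt_of_le_of_lt (Nat.le_of_dvd (by omega) hrn) hnp
    have hrc : r.Coprime p := (Nat.coprime_primes hr hp.out).2 hrlt.ne
    rcases frob_cases hq hq3 hpq t ht r hr hrlt hrc with h | h
    · exact Or.inl (hfrob r hr hrc P hP hrP _ h)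
    · exact Or.inr (hfrob r hr hrc P hP hrP _ h))
  obtain ⟨g, hg⟩ := multiplier e he hs hinv D lam n hn hlam hnp hc t hdvd
  -- translate
  have htprim : IsPrimitiveRoot (t : ZMod p) q := by
    rw [IsPrimitiveRoot.coe_units_iff, ← ht]
    exact IsPrimitiveRoot.orderOf t
  have ht1 : (t : ZMod p) ≠ 1 := htprim.ne_one (by omega)
  obtain ⟨s, hs0⟩ : ∃ s : ZMod p, g + t * s = s := by
    refine ⟨g / (1 - t), ?_⟩
    have : (1 - (t : ZMod p)) ≠ 0 := sub_ne_zero.2 ht1.symm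
    field_simp
    ring
  obtain ⟨D', hD'⟩ : ∃ D' : Finset (ZMod p), D' = D.map (addRightEmbedding s) := ⟨_, rfl⟩
  have hcard : D'.card = D.card := by rw [hD', Finset.card_map]
  have hsum : ∑ d ∈ D', e d = e s * ∑ d ∈ D, e d := by
    rw [hD', Finset.sum_map, Finset.mul_sum]
    refine Finset.sum_congr rfl fun d _ => ?_
    rw [addRightEmbedding_apply, AddChar.map_add_eq_mul, mul_comm]
  have hθ2 : (∑ d ∈ D', e d) * ((-1 : (ZMod p)ˣ) • ∑ d ∈ D', e d) = (n : O) := by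
    rw [hsum, smul_mul', hs, ← hθ']
    have : e s * e (((-1 : (ZMod p)ˣ) : ZMod p) * s) = 1 := by
      rw [← AddChar.map_add_eq_mul]
      simp
    linear_combination ((∑ d ∈ D, e d) * ((-1 : (ZMod p)ˣ) • ∑ d ∈ D, e d)) * this
  have htD : ∀ d ∈ D', (t : ZMod p) * d ∈ D' := by
    intro d hd
    rw [hD', Finset.mem_map] at hd ⊢
    obtain ⟨b, hb, rfl⟩ := hd
    refine ⟨t * b - g, hg b hb, ?_⟩
    simp only [addRightEmbedding_apply]
    linear_combination -hs0
  have htD' : ∀ (j : ℕ), ∀ d ∈ D', (t : ZMod p) ^ j * d ∈ D' := by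
    intro j
    induction j with
    | zero => intro d hd; simpa using hd
    | succ j ih =>
      intro d hd
      rw [pow_succ', mul_assoc]
      exact htD _ (ih d hd)
  obtain ⟨H, hH⟩ : ∃ H : Finset (ZMod p), H = Finset.univ.filter (fun h : ZMod p => h ^ q = 1) :=
    ⟨_, rfl⟩
  have hHcard : H.card = q := by
    rw [← htprim.card_nthRootsFinset]
    congr 1
    ext h
    rw [hH, Polynomial.mem_nthRootsFinset (by omega)]
    simp
  have hHD : ∀ d ∈ D', ∀ h ∈ H, d * h ∈ D' := by
    intro d hd h hh
    rw [hH, Finset.mem_filter] at hh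
    have : NeZero q := ⟨by omega⟩
    obtain ⟨j, _, rfl⟩ := htprim.eq_pow_of_pow_eq_one hh.2
    rw [mul_comm]
    exact htD' j d hd
  obtain ⟨a, haD, ha0⟩ : ∃ a ∈ D', a ≠ 0 := by
    obtain ⟨a, ha, b, hb, hab⟩ := Finset.one_lt_card.1 (show 1 < D'.card by omega)
    by_cases h : a = 0
    · exact ⟨b, hb, fun h' => hab (h.trans h'.symm)⟩
    · exact ⟨a, ha, h⟩
  obtain ⟨A, hA⟩ : ∃ A : Finset (ZMod p), A = H.image (fun h => a * h) := ⟨_, rfl⟩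
  have hinj : Function.Injective (fun h : ZMod p => a * h) := mul_right_injective₀ ha0
  have hAcard : A.card = q := by rw [hA, Finset.card_image_of_injective _ hinj, hHcard]
  have hAD : A ⊆ D' := by
    intro x hx
    rw [hA, Finset.mem_image] at hx
    obtain ⟨h, hh, rfl⟩ := hx
    exact hHD a haD h hh
  obtain ⟨x, hx⟩ : ∃ x : O, x = ∑ h ∈ Finset.univ.filter (fun h : ZMod p => h ^ q = 1), e h :=
    ⟨_, rfl⟩
  have hAsum : ∑ d ∈ A, e d = Units.mk0 a ha0 • x := by
    rw [hA, Finset.sum_image (fun _ _ _ _ h => hinj h), hx, ← hH, Finset.smul_sum]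
    refine Finset.sum_congr rfl fun h _ => ?_
    rw [hs, Units.val_mk0]
  obtain ⟨Q1, Q2⟩ := quartic_int hq hq3 hpq e he hs hinv x _ hx rfl n
  have hun : ∀ u : (ZMod p)ˣ, u • (n : O) = n :=
    fun u => map_natCast (MulSemiringAction.toRingHom _ O u) n
  rcases hpar with ⟨h1, h2⟩ | ⟨h1, h2⟩
  · have hEq : A = D' := Finset.eq_of_subset_of_card_le hAD (by omega)
    rw [← hEq, hAsum] at hθ2
    have h3 := congrArg (fun v => (Units.mk0 a ha0)⁻¹ • v) hθ2
    simp only [smul_mul', hun, inv_smul_smul] at h3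
    rw [smul_comm, inv_smul_smul] at h3
    exact Q1 (by omega) h3
  · have hone : (D' \ A).card = 1 := by
      rw [Finset.card_sdiff_of_subset hAD]; omega
    obtain ⟨b, hb⟩ := Finset.card_eq_one.1 hone
    have hbm : b ∈ D' \ A := by rw [hb]; exact Finset.mem_singleton_self b
    rw [Finset.mem_sdiff] at hbm
    have hb0 : b = 0 := by
      by_contra hb0
      have htb := htD b hbm.1
      by_cases hmem : (t : ZMod p) * b ∈ A
      · apply hbm.2
        rw [hA, Finset.mem_image] at hmem ⊢
        obtain ⟨h, hh, hhb⟩ := hmem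
        refine ⟨((t⁻¹ : (ZMod p)ˣ) : ZMod p) * h, ?_, ?_⟩
        · rw [hH, Finset.mem_filter] at hh ⊢
          refine ⟨Finset.mem_univ _, ?_⟩
          rw [mul_pow, hh.2, mul_one, ← Units.val_pow_eq_pow_val, inv_pow, ← ht,
            pow_orderOf_eq_one]
          simp
        · have : a * (((t⁻¹ : (ZMod p)ˣ) : ZMod p) * h) =
              ((t⁻¹ : (ZMod p)ˣ) : ZMod p) * (a * h) := by ring
          rw [this, hhb, Units.inv_mul_cancel_left]
      · have : (t : ZMod p) * b ∈ D' \ A := Finset.mem_sdiff.2 ⟨htb, hmem⟩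
        rw [hb, Finset.mem_singleton] at this
        exact ht1 (mul_right_cancel₀ hb0 (by rw [this, one_mul]))
    have hsum' : ∑ d ∈ D', e d = 1 + Units.mk0 a ha0 • x := by
      rw [← Finset.sum_sdiff hAD, hb, hAsum, Finset.sum_singleton, hb0,
        AddChar.map_zero_eq_one]
    rw [hsum'] at hθ2
    have h3 := congrArg (fun v => (Units.mk0 a ha0)⁻¹ • v) hθ2
    simp only [smul_mul', smul_add, smul_one, hun, inv_smul_smul] at h3
    rw [smul_comm _ (-1 : (ZMod p)ˣ), inv_smul_smul] at h3
    exact Q2 (by omega) h3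

theorem compl_count {p : ℕ} [hp : Fact p.Prime] (D : Finset (ZMod p)) (g : ZMod p) :
    ((Dᶜ ×ˢ Dᶜ).filter (fun x => x.2 - x.1 = g)).card + 2 * D.card =
      p + ((D ×ˢ D).filter (fun x => x.2 - x.1 = g)).card := by
  have key : ∀ S : Finset (ZMod p), ((S ×ˢ S).filter (fun x => x.2 - x.1 = g)).card =
      (S ∩ S.map (addRightEmbedding (-g))).card := by
    intro S
    refine Finset.card_bij (fun x _ => x.1) ?_ ?_ ?_
    · rintro ⟨x, y⟩ h
      simp only [Finset.mem_filter, Finset.mem_product] at h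
      simp only [Finset.mem_inter, Finset.mem_map, addRightEmbedding_apply]
      exact ⟨h.1.1, y, h.1.2, by rw [← h.2]; ring⟩
    · rintro ⟨x, y⟩ h ⟨x', y'⟩ h' hh
      simp only [Finset.mem_filter, Finset.mem_product] at h h' hh
      subst hh
      have := h.2.trans h'.2.symm
      simp at this
      rw [this]
    · intro b hb
      simp only [Finset.mem_inter, Finset.mem_map, addRightEmbedding_apply] at hb
      obtain ⟨h1, y, h2, rfl⟩ := hb
      refine ⟨(y + -g, y), ?_, rfl⟩
      simp only [Finset.mem_filter, Finset.mem_product]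
      exact ⟨⟨h1, h2⟩, by ring⟩
  rw [key, key]
  have h1 : Dᶜ ∩ Dᶜ.map (addRightEmbedding (-g)) = (D ∪ D.map (addRightEmbedding (-g)))ᶜ := by
    ext x
    simp only [Finset.mem_inter, Finset.mem_compl, Finset.mem_map, addRightEmbedding_apply,
      Finset.mem_union, not_or, not_exists, not_and]
    constructor
    · rintro ⟨hx, y, hy, rfl⟩
      exact ⟨hx, fun z hz hzy => hy (by rwa [← add_right_cancel hzy])⟩
    · rintro ⟨hx, h⟩
      exact ⟨hx, x + g, fun hh => h _ hh (by ring), by ring⟩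
  rw [h1, Finset.card_compl, ZMod.card]
  have h2 := Finset.card_union_add_card_inter D (D.map (addRightEmbedding (-g)))
  rw [Finset.card_map] at h2
  have h3 : (D ∪ D.map (addRightEmbedding (-g))).card ≤ p := by
    have := Finset.card_le_univ (D ∪ D.map (addRightEmbedding (-g)))
    rwa [ZMod.card] at this
  omega

/-- If `q > 3` is a prime such that `p = 4q + 1` is also prime, then there is no nontrivial
difference set in the cyclic group `ZMod p`. -/
theorem no_nontrivial_diff_set_4q_add_one (q p : ℕ) (hq : q.Prime) (hq3 : 3 < q)
    (hpdef : p = 4 * q + 1) (hp : p.Prime)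
    (D : Finset (ZMod p)) (lam : ℕ) (hD : IsDiffSetZMod p D lam) :
    D.card ≤ 1 ∨ p - 1 ≤ D.card := by
  have : Fact p.Prime := ⟨hp⟩
  by_contra hcon
  push Not at hcon
  obtain ⟨h1, h2⟩ := hcon
  by_cases hk : D.card ≤ 2 * q
  · exact diffset_core hq hq3 hpdef D lam hD.2 h1 hk
  · have hcc : Dᶜ.card = p - D.card := by rw [Finset.card_compl, ZMod.card]
    refine diffset_core hq hq3 hpdef Dᶜ (p + lam - 2 * D.card) ?_ (by omega) (by omega)
    intro g hg
    have := compl_count D g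
    rw [hD.2 g hg] at this
    omega
end

section
/- Let q be an odd prime such that p = 2q + 1 is also prime, and let D be a nontrivial difference set in the additive group ZMod p with parameter λ. Then D has Paley parameters: either |D| = q and 2λ = q − 1, or |D| = q + 1 and 2λ = q + 1. -/
/-- If `q` is an odd prime such that `p = 2q + 1` is also prime, then every nontrivial
difference set `D` in `ZMod p` has Paley parameters: either `|D| = q` and `2λ = q - 1`,
or `|D| = q + 1` and `2λ = q + 1`. -/
theorem diff_set_safe_prime_paley_parameters (q p : ℕ) (hq : q.Prime) (hqodd : Odd q)
    (hpdef : p = 2 * q + 1) (hp : p.Prime)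
    (D : Finset (ZMod p)) (lam : ℕ) (hD : IsDiffSetZMod p D lam)
    (hnt1 : 2 ≤ D.card) (hnt2 : D.card ≤ p - 2) :
    (D.card = q ∧ 2 * lam = q - 1) ∨ (D.card = q + 1 ∧ 2 * lam = q + 1) := by
  haveI : Fact p.Prime := ⟨hp⟩
  obtain ⟨hl, hD⟩ := hD
  have hcount : D.offDiag.card = (p - 1) * lam := by
    have h1 := Finset.card_eq_sum_card_fiberwise (s := D.offDiag)
      (t := Finset.univ.erase (0 : ZMod p)) (f := fun x => x.2 - x.1) (by
        intro x hx
        simp only [Finset.mem_coe, Finset.mem_offDiag] at hx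
        simp only [Finset.coe_erase, Finset.coe_univ, Set.mem_diff, Set.mem_univ, true_and,
          Set.mem_singleton_iff]
        exact fun h => hx.2.2 (sub_eq_zero.mp h).symm)
    rw [h1, Finset.sum_congr rfl (g := fun _ => lam)]
    · rw [Finset.sum_const, Finset.card_erase_of_mem (Finset.mem_univ _), Finset.card_univ,
        ZMod.card, smul_eq_mul]
    · intro g hg
      have hg0 : g ≠ 0 := (Finset.mem_erase.mp hg).1
      rw [← hD g hg0]
      congr 1
      ext x
      simp only [Finset.mem_filter, Finset.mem_offDiag, Finset.mem_product]
      constructor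
      · rintro ⟨⟨a, b, _⟩, e⟩
        exact ⟨⟨a, b⟩, e⟩
      · rintro ⟨⟨a, b⟩, e⟩
        refine ⟨⟨a, b, fun h => hg0 ?_⟩, e⟩
        rw [← e, h, sub_self]
  rw [Finset.offDiag_card] at hcount
  have hq0 := hq.pos
  obtain ⟨m, hm⟩ : ∃ m, D.card = m + 1 := ⟨D.card - 1, by omega⟩
  have hp1 : p - 1 = 2 * q := by omega
  rw [hm, hp1] at hcount
  have hk : (m + 1) * m = q * (2 * lam) := by
    have : (m + 1) * (m + 1) - (m + 1) = (m + 1) * m := by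
      rw [mul_add, mul_one, Nat.add_sub_cancel]
    rw [← this, hcount]; ring
  rcases (Nat.Prime.dvd_mul hq).mp (Dvd.intro _ hk.symm) with ⟨c, hc⟩ | ⟨c, hc⟩
  · have hc1 : c = 1 := by
      have : c < 2 := by
        by_contra h
        have : q * 2 ≤ q * c := Nat.mul_le_mul_left _ (by omega)
        omega
      have : c ≠ 0 := by rintro rfl; omega
      omega
    subst hc1
    rw [mul_one] at hc
    rw [hc] at hk
    have := Nat.eq_of_mul_eq_mul_left hq0 hk
    left; omega
  · have hc1 : c = 1 := by
      have : c < 2 := by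
        by_contra h
        have : q * 2 ≤ q * c := Nat.mul_le_mul_left _ (by omega)
        omega
      have : c ≠ 0 := by rintro rfl; omega
      omega
    subst hc1
    rw [mul_one] at hc
    rw [hc, mul_comm] at hk
    have := Nat.eq_of_mul_eq_mul_left hq0 hk
    right; omega
end

section
/- Let q be a prime such that p = 4q + 1 is also prime, and let D be a nontrivial difference set in the additive group ZMod p with parameter λ satisfying 2·|D| < p. Then either |D| = q and 4λ = q − 1, or |D| = q + 1 and 4λ = q + 1. -/
/-- If `q` is a prime such that `p = 4q + 1` is also prime, then every nontrivial
difference set `D` in `ZMod p` with `2|D| < p` satisfies either `|D| = q` and `4λ = q - 1`,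
or `|D| = q + 1` and `4λ = q + 1`. -/
theorem diff_set_4q_add_one_parameters (q p : ℕ) (hq : q.Prime)
    (hpdef : p = 4 * q + 1) (hp : p.Prime)
    (D : Finset (ZMod p)) (lam : ℕ) (hD : IsDiffSetZMod p D lam)
    (hnt1 : 2 ≤ D.card) (hnt2 : D.card ≤ p - 2) (hsmall : 2 * D.card < p) :
    (D.card = q ∧ 4 * lam = q - 1) ∨ (D.card = q + 1 ∧ 4 * lam = q + 1) := by
  obtain ⟨_, hD⟩ := hD
  haveI : Fact p.Prime := ⟨hp⟩
  have hcount : D.card * D.card - D.card = (p - 1) * lam := by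
    rw [← Finset.offDiag_card]
    have hmaps : ∀ x ∈ D.offDiag, (x.2 - x.1) ∈ (Finset.univ.erase (0 : ZMod p)) := by
      intro x hx
      rw [Finset.mem_offDiag] at hx
      simp only [Finset.mem_erase, Finset.mem_univ, and_true]
      exact fun h => hx.2.2 (sub_eq_zero.mp h).symm
    rw [Finset.card_eq_sum_card_fiberwise hmaps]
    have : ∀ g ∈ Finset.univ.erase (0 : ZMod p),
        (D.offDiag.filter (fun x => x.2 - x.1 = g)).card = lam := by
      intro g hg
      have hg0 : g ≠ 0 := (Finset.mem_erase.mp hg).1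
      rw [← hD g hg0]
      congr 1
      ext x
      simp only [Finset.mem_filter, Finset.mem_offDiag, Finset.mem_product]
      constructor
      · rintro ⟨⟨h1, h2, _⟩, h⟩
        exact ⟨⟨h1, h2⟩, h⟩
      · rintro ⟨⟨h1, h2⟩, h⟩
        refine ⟨⟨h1, h2, ?_⟩, h⟩
        intro he
        apply hg0
        rw [← h, he, sub_self]
    rw [Finset.sum_congr rfl this, Finset.sum_const, Finset.card_erase_of_mem (Finset.mem_univ _),
      Finset.card_univ, ZMod.card, smul_eq_mul]
  have hq0 : 0 < q := hq.pos
  generalize D.card = k at *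
  obtain ⟨m, rfl⟩ : ∃ m, k = m + 1 := ⟨k - 1, by omega⟩
  have h1 : (m + 1) * m = q * (4 * lam) := by
    have e1 : (m + 1) * (m + 1) - (m + 1) = (m + 1) * m := by
      rw [Nat.mul_succ]; omega
    have e2 : p - 1 = 4 * q := by omega
    rw [← e1, hcount, e2]; ring
  rcases hq.dvd_mul.mp (Dvd.intro _ h1.symm) with ⟨c, hc⟩ | ⟨c, hc⟩
  · have hc3 : c < 3 := by
      by_contra h
      have := Nat.mul_le_mul_left q (show 3 ≤ c by omega)
      omega
    interval_cases c
    · omega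
    · left
      rw [hc, mul_one] at h1
      have := Nat.eq_of_mul_eq_mul_left hq0 h1
      omega
    · rw [hc, mul_assoc] at h1
      have := Nat.eq_of_mul_eq_mul_left hq0 h1
      omega
  · have hc3 : c < 2 := by
      by_contra h
      have := Nat.mul_le_mul_left q (show 2 ≤ c by omega)
      omega
    interval_cases c
    · omega
    · right
      have hm : m = q := by omega
      subst hm
      rw [mul_comm] at h1
      have := Nat.eq_of_mul_eq_mul_left hq0 h1
      omega
end

section
/- Let q > 3 be a prime such that p = 4q + 1 is also prime, and let D be a nontrivial difference set in the additive group ZMod p with 2·|D| < p. Then the set of multipliers of D, viewed as a subset of the unit group (ZMod p)ˣ, has cardinality 1 or q. -/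
theorem mult_iff_aux {p : ℕ} [Fact p.Prime] (D : Finset (ZMod p)) (t : (ZMod p)ˣ) :
    (∃ g : ZMod p, D.image (fun d => (t : ZMod p) * d) = D.image (fun d => d + g)) ↔
    ∃ g : ZMod p, ∀ x, x ∈ D ↔ (t : ZMod p) * x + g ∈ D := by
  constructor
  · rintro ⟨g, hg⟩
    refine ⟨-g, fun x => ?_⟩
    have h := Finset.ext_iff.1 hg ((t : ZMod p) * x)
    simp only [Finset.mem_image, Units.mul_right_inj, exists_eq_right] at h
    rw [h]
    constructor
    · rintro ⟨a, ha, h1⟩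
      rw [← h1]; simpa using ha
    · intro h1
      exact ⟨_, h1, by ring⟩
  · rintro ⟨g, hg⟩
    refine ⟨-g, ?_⟩
    ext y
    simp only [Finset.mem_image]
    constructor
    · rintro ⟨a, ha, rfl⟩
      exact ⟨_, (hg a).1 ha, by ring⟩
    · rintro ⟨a, ha, rfl⟩
      refine ⟨((t⁻¹ : (ZMod p)ˣ) : ZMod p) * (a + -g), (hg _).2 ?_, ?_⟩
      · rw [← mul_assoc, Units.mul_inv]; simpa using ha
      · rw [← mul_assoc, Units.mul_inv]; simp

/-- The multipliers of `D` form a subgroup. -/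
def multSubgroupAux {p : ℕ} [Fact p.Prime] (D : Finset (ZMod p)) : Subgroup (ZMod p)ˣ where
  carrier := {t | ∃ g : ZMod p, ∀ x, x ∈ D ↔ (t : ZMod p) * x + g ∈ D}
  one_mem' := ⟨0, fun x => by simp⟩
  mul_mem' := by
    rintro a b ⟨g, hg⟩ ⟨h, hh⟩
    refine ⟨a * h + g, fun x => ?_⟩
    rw [hh x, hg, Units.val_mul]
    ring_nf
  inv_mem' := by
    rintro a ⟨g, hg⟩
    refine ⟨-((a⁻¹ : (ZMod p)ˣ) : ZMod p) * g, fun x => ?_⟩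
    rw [hg (_ + _), mul_add, ← mul_assoc, ← mul_assoc, mul_neg, Units.mul_inv]
    simp

theorem parity_aux {p : ℕ} [Fact p.Prime] (h2 : (2 : ZMod p) ≠ 0) (D : Finset (ZMod p))
    (c : ZMod p) (hc : ∀ x, x ∈ D ↔ -x + c ∈ D) (d : ZMod p) :
    ((((D ×ˢ D).filter (fun x => x.2 - x.1 = 2 * d - c)).erase (-d + c, d)).card : ZMod 2)
      = 0 := by
  have := Finset.sum_involution
    (s := ((D ×ˢ D).filter (fun x => x.2 - x.1 = 2 * d - c)).erase (-d + c, d))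
    (f := fun _ => (1 : ZMod 2)) (fun x _ => (-x.2 + c, -x.1 + c))
    (fun _ _ => by decide) ?_ ?_ ?_
  · simpa using this
  · rintro ⟨a, b⟩ ha - h
    simp only [Finset.mem_erase, Finset.mem_filter, Finset.mem_product, Prod.mk.injEq, ne_eq] at ha h
    obtain ⟨h1, h3⟩ := h
    have hb : b = d := by
      apply mul_left_cancel₀ h2
      linear_combination ha.2.2 - h1
    exact ha.1 ⟨by rw [← h1, hb], hb⟩
  · rintro ⟨a, b⟩ ha
    simp only [Finset.mem_erase, Finset.mem_filter, Finset.mem_product, Prod.mk.injEq, ne_eq] at ha ⊢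
    refine ⟨?_, ⟨(hc b).1 ha.2.1.2, (hc a).1 ha.2.1.1⟩, ?_⟩
    · rintro ⟨h1, h3⟩
      exact ha.1 ⟨by linear_combination -h3, by linear_combination -h1⟩
    · linear_combination ha.2.2
  · rintro ⟨a, b⟩ ha
    simp

theorem neg_one_aux {p : ℕ} [Fact p.Prime] (h2 : (2 : ZMod p) ≠ 0) (D : Finset (ZMod p))
    (lam : ℕ) (hD : IsDiffSetZMod p D lam)
    (hnt1 : 2 ≤ D.card) (hnt2 : D.card ≤ p - 2)
    (c : ZMod p) (hc : ∀ x, x ∈ D ↔ -x + c ∈ D) : False := by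
  have hp2 := (Fact.out : p.Prime).two_le
  obtain ⟨d, hd, hdc⟩ : ∃ d ∈ D, d ≠ c / 2 := Finset.exists_mem_ne (by omega) _
  obtain ⟨e, he, hec⟩ : ∃ e ∈ Dᶜ, e ≠ c / 2 := Finset.exists_mem_ne (by
    rw [Finset.card_compl, ZMod.card]; omega) _
  have key : ∀ x : ZMod p, x ≠ c / 2 → 2 * x - c ≠ 0 := by
    intro x hx h
    apply hx
    field_simp
    linear_combination h
  have hd1 := parity_aux h2 D c hc d
  have he1 := parity_aux h2 D c hc e
  rw [Finset.card_erase_of_mem, hD.2 _ (key d hdc), Nat.cast_sub hD.1] at hd1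
  · rw [Finset.erase_eq_of_notMem, hD.2 _ (key e hec)] at he1
    · rw [he1] at hd1
      exact absurd hd1 (by decide)
    · simp only [Finset.mem_filter, Finset.mem_product]
      exact fun h => Finset.mem_compl.1 he h.1.2
  · simp only [Finset.mem_filter, Finset.mem_product]
    exact ⟨⟨(hc d).1 hd, hd⟩, by ring⟩

/-- Let `q > 3` be a prime with `p = 4q + 1` also prime, and let `D` be a nontrivial
difference set in `ZMod p` with `2|D| < p`. Then the set of multipliers of `D`,
viewed as a subset of the unit group `(ZMod p)ˣ`, has cardinality `1` or `q`. -/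
theorem multiplier_group_card (q p : ℕ) (hq : q.Prime) (hq3 : 3 < q)
    (hpdef : p = 4 * q + 1) (hp : p.Prime)
    (D : Finset (ZMod p)) (lam : ℕ) (hD : IsDiffSetZMod p D lam)
    (hnt1 : 2 ≤ D.card) (hnt2 : D.card ≤ p - 2) (hsmall : 2 * D.card < p) :
    {t : (ZMod p)ˣ | ∃ g : ZMod p,
        D.image (fun d => (t : ZMod p) * d) = D.image (fun d => d + g)}.ncard = 1 ∨
    {t : (ZMod p)ˣ | ∃ g : ZMod p,
        D.image (fun d => (t : ZMod p) * d) = D.image (fun d => d + g)}.ncard = q := by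
  haveI : Fact p.Prime := ⟨hp⟩
  have h2 : (2 : ZMod p) ≠ 0 := by
    intro h
    have h' : ((2 : ℕ) : ZMod p) = 0 := by exact_mod_cast h
    rw [ZMod.natCast_eq_zero_iff] at h'
    have := Nat.le_of_dvd (by norm_num) h'
    omega
  have hset : {t : (ZMod p)ˣ | ∃ g : ZMod p,
      D.image (fun d => (t : ZMod p) * d) = D.image (fun d => d + g)}
      = (multSubgroupAux D : Set (ZMod p)ˣ) := by
    ext t
    exact mult_iff_aux D t
  rw [hset]
  have hn : ((multSubgroupAux D : Set (ZMod p)ˣ)).ncard = Nat.card (multSubgroupAux D) := rfl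
  rw [hn]
  have hdvd : Nat.card (multSubgroupAux D) ∣ 4 * q := by
    have h := Subgroup.card_subgroup_dvd_card (multSubgroupAux D)
    rw [Nat.card_eq_fintype_card (α := (ZMod p)ˣ), ZMod.card_units, show p - 1 = 4 * q by omega] at h
    exact h
  have hodd : ¬ 2 ∣ Nat.card (multSubgroupAux D) := by
    intro h
    haveI : Fact (Nat.Prime 2) := ⟨Nat.prime_two⟩
    obtain ⟨⟨t, ht⟩, hx⟩ := exists_prime_orderOf_dvd_card' 2 h
    rw [Subgroup.orderOf_mk, orderOf_eq_prime_iff] at hx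
    have hsq : (t : ZMod p) ^ 2 = 1 := by
      rw [← Units.val_pow_eq_pow_val, hx.1, Units.val_one]
    have hm : (t : ZMod p) = -1 := by
      rcases mul_self_eq_one_iff.1 ((sq (t : ZMod p)).symm.trans hsq) with h | h
      · exact absurd (Units.ext h) hx.2
      · exact h
    obtain ⟨c, hc⟩ := ht
    rw [hm] at hc
    exact neg_one_aux h2 D lam hD hnt1 hnt2 c (by simpa using hc)
  have hcop : Nat.Coprime (Nat.card (multSubgroupAux D)) 4 := by
    have : Nat.Coprime (Nat.card (multSubgroupAux D)) 2 :=
      ((Nat.Prime.coprime_iff_not_dvd Nat.prime_two).2 hodd).symm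
    exact this.pow_right 2
  exact (Nat.dvd_prime hq).1 (hcop.dvd_of_dvd_mul_left hdvd)
end

section
/- Let q > 3 be a prime such that p = 4q + 1 is also prime, and let H = {x⁴ : x ∈ (ZMod p)ˣ} be the subgroup of quartic residues of (ZMod p)ˣ. Then for every nonzero a ∈ ZMod p, the coset a·H (viewed as a subset of ZMod p) is not a difference set in the additive group ZMod p. -/
lemma qr_prim : IsPrimitiveRoot (⟨0, 1⟩ : GaussianInt) 4 := by
  rw [IsPrimitiveRoot.iff (by norm_num)]
  refine ⟨by decide, fun l h0 h4 => ?_⟩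
  interval_cases l <;> decide

lemma qr_star (v : GaussianInt) (h : v ^ 4 = 1) : star v = v ^ 3 := by
  have hu : IsUnit v := IsUnit.of_pow_eq_one h (by norm_num)
  have hn : v.norm = 1 := by
    have h1 := Zsqrtd.norm_eq_one_iff.mpr hu
    have h2 := GaussianInt.norm_nonneg v
    omega
  have h3 : v * star v = 1 := by
    have := Zsqrtd.norm_eq_mul_conj v
    rw [hn] at this
    simpa using this.symm
  calc star v = v ^ 4 * star v := by rw [h, one_mul]
    _ = v ^ 3 * (v * star v) := by ring
    _ = v ^ 3 := by rw [h3, mul_one]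

/-- A character of order `4` detects fourth powers. -/
lemma qr_mem {p : ℕ} [Fact p.Prime] (χ : MulChar (ZMod p) GaussianInt) (hχ : orderOf χ = 4)
    (t : (ZMod p)ˣ) (ht : χ t = 1) : ∃ u : (ZMod p)ˣ, t = u ^ 4 := by
  obtain ⟨g, hg⟩ := IsCyclic.exists_generator (α := (ZMod p)ˣ)
  obtain ⟨k, hk⟩ := (mem_powers_iff_mem_zpowers).mpr (hg t)
  simp only at hk
  have h4 : orderOf (χ g) ∣ k := by
    apply orderOf_dvd_of_pow_eq_one
    rw [← map_pow, ← Units.val_pow_eq_pow_val, hk, ht]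
  have h5 : 4 ∣ orderOf (χ g) := by
    rw [← hχ]
    apply orderOf_dvd_of_pow_eq_one
    ext1 u
    obtain ⟨m, hm⟩ := (mem_powers_iff_mem_zpowers).mpr (hg u)
    simp only at hm
    rw [MulChar.pow_apply_coe, MulChar.one_apply_coe, ← hm, Units.val_pow_eq_pow_val, map_pow,
      ← pow_mul, mul_comm, pow_mul, pow_orderOf_eq_one, one_pow]
  obtain ⟨j, rfl⟩ := h5.trans h4
  exact ⟨g ^ j, by rw [← hk, ← pow_mul, mul_comm]⟩

lemma qr_norm {p : ℕ} [Fact p.Prime] (χ : MulChar (ZMod p) GaussianInt) (hχ : orderOf χ = 4) :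
    jacobiSum χ (χ ^ 2) * jacobiSum (χ ^ 3) (χ ^ 2) = (p : GaussianInt) := by
  have h4 : χ ^ 4 = 1 := by rw [← hχ]; exact pow_orderOf_eq_one χ
  have hinj : Function.Injective GaussianInt.toComplex := fun a b h => GaussianInt.toComplex_inj.mp h
  have hne : ∀ k, k ≠ 0 → k < 4 → χ ^ k ≠ 1 := fun k h0 hk =>
    pow_ne_one_of_lt_orderOf h0 (by omega)
  have hcne : ∀ ψ : MulChar (ZMod p) GaussianInt, ψ ≠ 1 → ψ.ringHomComp GaussianInt.toComplex ≠ 1 :=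
    fun ψ h => (MulChar.ringHomComp_ne_one_iff hinj).mpr h
  have h := jacobiSum_mul_jacobiSum_inv (F := ZMod p) (F' := ℂ)
    (χ := χ.ringHomComp GaussianInt.toComplex) (φ := (χ ^ 2).ringHomComp GaussianInt.toComplex)
    (by rw [ringChar.eq_zero, ZMod.ringChar_zmod_n]; exact (Fact.out : p.Prime).ne_zero.symm)
    (hcne _ (by simpa using hne 1 (by norm_num) (by norm_num)))
    (hcne _ (hne 2 (by norm_num) (by norm_num)))
    (by rw [← MulChar.ringHomComp_mul, ← pow_succ']
        exact hcne _ (hne 3 (by norm_num) (by norm_num)))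
  rw [MulChar.ringHomComp_inv, MulChar.ringHomComp_inv, jacobiSum_ringHomComp,
    jacobiSum_ringHomComp, ← map_mul, ZMod.card] at h
  have e1 : χ⁻¹ = χ ^ 3 := inv_eq_of_mul_eq_one_right (by rw [← pow_succ', h4])
  have e2 : (χ ^ 2)⁻¹ = χ ^ 2 := inv_eq_of_mul_eq_one_right (by rw [← pow_add, h4])
  rw [e1, e2] at h
  apply hinj
  rw [h, map_natCast]

lemma qr_conj {p : ℕ} [Fact p.Prime] (χ : MulChar (ZMod p) GaussianInt) (h4 : χ ^ 4 = 1) :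
    jacobiSum (χ ^ 3) (χ ^ 2) = star (jacobiSum χ (χ ^ 2)) := by
  have hu : ∀ u : (ZMod p)ˣ, (χ u) ^ 4 = 1 := fun u => by
    rw [← MulChar.pow_apply_coe, h4, MulChar.one_apply_coe]
  have e1 : χ ^ 3 = χ.ringHomComp (starRingEnd GaussianInt) := by
    ext1 u
    rw [MulChar.ringHomComp_apply, MulChar.pow_apply_coe, starRingEnd_apply, qr_star _ (hu u)]
  have e2 : χ ^ 2 = (χ ^ 2).ringHomComp (starRingEnd GaussianInt) := by
    ext1 u
    rw [MulChar.ringHomComp_apply, MulChar.pow_apply_coe, starRingEnd_apply, star_pow,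
      qr_star _ (hu u), ← pow_mul]
    calc (χ u) ^ 2 = (χ u) ^ 4 * (χ u) ^ 2 := by rw [hu u, one_mul]
      _ = _ := by ring
  rw [e1]
  conv_lhs => rw [e2]
  rw [jacobiSum_ringHomComp, starRingEnd_apply]

lemma qr_four {p : ℕ} [Fact p.Prime] (χ : MulChar (ZMod p) GaussianInt) (h4 : χ ^ 4 = 1)
    (t : ZMod p) :
    4 * (if χ t = 1 then (1 : GaussianInt) else 0)
      = (1 : MulChar (ZMod p) GaussianInt) t + χ t + (χ ^ 2) t + (χ ^ 3) t := by
  by_cases h0 : t = 0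
  · subst h0
    simp [MulChar.map_zero]
  · obtain ⟨u, rfl⟩ := (isUnit_iff_ne_zero.mpr h0)
    have hu : (χ u) ^ 4 = 1 := by
      rw [← MulChar.pow_apply_coe, h4, MulChar.one_apply_coe]
    rw [MulChar.one_apply_coe, MulChar.pow_apply_coe, MulChar.pow_apply_coe]
    split_ifs with h
    · rw [h]; norm_num
    · have : (χ u - 1) * (1 + χ u + χ u ^ 2 + χ u ^ 3) = 0 := by linear_combination hu
      rcases mul_eq_zero.mp this with hfac | hfac
      · exact absurd (sub_eq_zero.mp hfac) h
      · rw [hfac, mul_zero]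

lemma qr_sum {p : ℕ} [Fact p.Prime] (χ : MulChar (ZMod p) GaussianInt) (hχ : orderOf χ = 4) :
    4 * ∑ t : ZMod p, (if χ t = 1 then (χ ^ 2) (1 - t) else 0)
      = -2 + jacobiSum χ (χ ^ 2) + jacobiSum (χ ^ 3) (χ ^ 2) := by
  have h4 : χ ^ 4 = 1 := by rw [← hχ]; exact pow_orderOf_eq_one χ
  have h2 : χ ^ 2 ≠ 1 := pow_ne_one_of_lt_orderOf (by norm_num) (by omega)
  have e2 : (χ ^ 2)⁻¹ = χ ^ 2 := inv_eq_of_mul_eq_one_right (by rw [← pow_add, h4])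
  have j1 := jacobiSum_one_nontrivial h2
  have j2 := jacobiSum_nontrivial_inv h2
  have hm : (χ ^ 2) (-1) = 1 := by
    rw [MulChar.pow_apply' _ (by norm_num), ← map_pow]; simp
  rw [e2, hm] at j2
  have : 4 * ∑ t : ZMod p, (if χ t = 1 then (χ ^ 2) (1 - t) else 0)
      = jacobiSum 1 (χ ^ 2) + jacobiSum χ (χ ^ 2) + jacobiSum (χ ^ 2) (χ ^ 2)
        + jacobiSum (χ ^ 3) (χ ^ 2) := by
    simp only [jacobiSum, ← Finset.sum_add_distrib, Finset.mul_sum]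
    refine Finset.sum_congr rfl fun t _ => ?_
    rw [← add_mul, ← add_mul, ← add_mul, ← qr_four χ h4 t]
    split_ifs <;> ring
  rw [this, j1, j2]; ring

theorem quartic_residue_coset_not_diff_set (q p : ℕ) (hq : q.Prime) (hq3 : 3 < q)
    (hpdef : p = 4 * q + 1) (hp : p.Prime)
    (a : ZMod p) (ha : a ≠ 0) (D : Finset (ZMod p))
    (hDdef : (D : Set (ZMod p)) = {x : ZMod p | ∃ u : (ZMod p)ˣ, x = a * (u : ZMod p) ^ 4}) :
    ¬ ∃ lam : ℕ, IsDiffSetZMod p D lam := by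
  rintro ⟨lam, -, hlam⟩
  have : Fact p.Prime := ⟨hp⟩
  obtain ⟨χ, hχ⟩ := MulChar.exists_mulChar_orderOf (ZMod p) (n := 4)
    (by rw [ZMod.card, hpdef]; simp) qr_prim
  have h4 : χ ^ 4 = 1 := by rw [← hχ]; exact pow_orderOf_eq_one χ
  have h2 : χ ^ 2 ≠ 1 := pow_ne_one_of_lt_orderOf (by norm_num) (by omega)
  have hm : (χ ^ 2) (-1) = 1 := by
    rw [MulChar.pow_apply' _ (by norm_num), ← map_pow]; simp
  have hu : ∀ u : (ZMod p)ˣ, (χ u) ^ 4 = 1 := fun u => by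
    rw [← MulChar.pow_apply_coe, h4, MulChar.one_apply_coe]
  have hnz : ∀ (ψ : MulChar (ZMod p) GaussianInt) (x : ZMod p), x ≠ 0 → ψ x ≠ 0 := fun ψ x hx =>
    ((isUnit_iff_ne_zero.mpr hx).map ψ).ne_zero
  have hD : ∀ x, x ∈ D ↔ χ x = χ a := by
    intro x
    have : x ∈ D ↔ ∃ u : (ZMod p)ˣ, x = a * (u : ZMod p) ^ 4 := by
      rw [← Finset.mem_coe, hDdef]; rfl
    rw [this]
    constructor
    · rintro ⟨u, rfl⟩
      rw [map_mul, map_pow, hu, mul_one]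
    · intro h
      have hx : x ≠ 0 := by
        rintro rfl
        rw [MulChar.map_zero] at h
        exact hnz χ a ha h.symm
      obtain ⟨u, hupow⟩ := qr_mem χ hχ (Units.mk0 (x / a) (div_ne_zero hx ha)) (by
        apply mul_left_cancel₀ (hnz χ a ha)
        rw [Units.val_mk0, ← map_mul, mul_div_cancel₀ _ ha, h, mul_one])
      refine ⟨u, ?_⟩
      have := congrArg Units.val hupow
      rw [Units.val_mk0, Units.val_pow_eq_pow_val] at this
      rw [← this, mul_div_cancel₀ _ ha]
  have haD : a ∈ D := (hD a).mpr rfl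
  have hzero : ∑ x ∈ D ×ˢ D, (χ ^ 2) (x.2 - x.1) = 0 := by
    rw [← Finset.sum_fiberwise (D ×ˢ D) (fun x => x.2 - x.1)]
    have : ∀ g : ZMod p, ∑ x ∈ (D ×ˢ D).filter (fun x => x.2 - x.1 = g), (χ ^ 2) (x.2 - x.1)
        = (lam : GaussianInt) * (χ ^ 2) g := by
      intro g
      rw [Finset.sum_congr rfl (g := fun _ => (χ ^ 2) g)
        (fun x hx => by rw [(Finset.mem_filter.mp hx).2]), Finset.sum_const, nsmul_eq_mul]
      by_cases hg : g = 0
      · rw [hg, MulChar.map_zero, mul_zero, mul_zero]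
      · rw [hlam g hg]
    rw [Finset.sum_congr rfl (fun g _ => this g), ← Finset.mul_sum,
      MulChar.sum_eq_zero_of_ne_one h2, mul_zero]
  set S := ∑ t : ZMod p, (if χ t = 1 then (χ ^ 2) (1 - t) else 0) with hS
  have hin : ∀ x ∈ D, ∑ y ∈ D, (χ ^ 2) (y - x) = (χ ^ 2) a * S := by
    intro x hx
    have hxa := (hD x).mp hx
    have hx0 : x ≠ 0 := by
      rintro rfl
      rw [MulChar.map_zero] at hxa
      exact hnz χ a ha hxa.symm
    have hDf : D = Finset.univ.filter (fun y => χ y = χ a) := by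
      ext y; simp [hD]
    rw [hDf, Finset.sum_filter, ← Equiv.sum_comp (Equiv.mulLeft₀ x hx0), hS, Finset.mul_sum]
    refine Finset.sum_congr rfl fun t _ => ?_
    have e : (χ ^ 2) (x * t - x) = (χ ^ 2) a * (χ ^ 2) (1 - t) := by
      have : x * t - x = x * ((-1) * (1 - t)) := by ring
      rw [this, map_mul, map_mul, hm, one_mul, MulChar.pow_apply' χ (by norm_num) x, hxa,
        ← MulChar.pow_apply' χ (by norm_num) a]
    have eiff : χ (x * t) = χ a ↔ χ t = 1 := by
      rw [map_mul, hxa]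
      exact mul_eq_left₀ (hnz χ a ha)
    simp only [Equiv.mulLeft₀_apply, e, eiff]
    split_ifs <;> simp
  have hS0 : S = 0 := by
    rw [Finset.sum_product, Finset.sum_congr rfl hin, Finset.sum_const, nsmul_eq_mul] at hzero
    have hc : (D.card : GaussianInt) ≠ 0 := by
      exact_mod_cast (Finset.card_pos.mpr ⟨a, haD⟩).ne'
    rcases mul_eq_zero.mp hzero with h | h
    · exact absurd h hc
    · exact (mul_eq_zero.mp h).resolve_left (hnz _ a ha)
  have hsum := qr_sum χ hχ
  have hnorm := qr_norm χ hχ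
  rw [← hS, hS0, qr_conj χ h4] at hsum
  rw [qr_conj χ h4] at hnorm
  generalize jacobiSum χ (χ ^ 2) = J at hsum hnorm
  have hre : J.re = 1 := by
    have := congrArg Zsqrtd.re hsum
    simp at this
    omega
  have hn : J.re * J.re + J.im * J.im = p := by
    have := congrArg Zsqrtd.re hnorm
    simp at this
    linarith
  rw [hre, hpdef] at hn
  push_cast at hn
  have hi : J.im * J.im = 4 * q := by linarith
  have hev : Even J.im := by
    have : Even (J.im * J.im) := ⟨2 * q, by rw [hi]; ring⟩
    simpa [Int.even_mul] using this
  obtain ⟨b, hb⟩ := hev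
  have hb2 : b * b = q := by rw [hb] at hi; linarith
  have hb3 : b.natAbs * b.natAbs = q := by
    zify
    rw [← hb2]; exact abs_mul_abs_self b
  exact (Nat.prime_iff.mp hq).irreducible.not_isSquare ⟨b.natAbs, hb3.symm⟩
end

section
/- Let q > 3 be a prime such that p = 4q + 1 is also prime, and let H = {x⁴ : x ∈ (ZMod p)ˣ} be the subgroup of quartic residues of (ZMod p)ˣ. Then for every nonzero a ∈ ZMod p, the set (a·H) ∪ {0} (viewed as a subset of ZMod p) is not a difference set in the additive group ZMod p. -/
open AddMonoidAlgebra in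
theorem aux {p : ℕ} [Fact p.Prime] (D : Finset (ZMod p)) (lam : ℕ) (h3 : (3 : ZMod p) ≠ 0)
    (hcount : ∀ g : ZMod p,
      (((D ×ˢ D).filter (fun x => x.2 - x.1 = g)).card : ZMod 3) = (lam : ZMod 3))
    (h9 : ∀ x ∈ D, -9 * x ∈ D) (h0 : (0 : ZMod p) ∈ D) : D = Finset.univ := by
  classical
  have : Fact (Nat.Prime 3) := ⟨Nat.prime_three⟩
  have : CharP (AddMonoidAlgebra (ZMod 3) (ZMod p)) 3 :=
    charP_of_injective_algebraMap (algebraMap (ZMod 3) (AddMonoidAlgebra (ZMod 3) (ZMod p))).injective 3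
  let s : ZMod p → AddMonoidAlgebra (ZMod 3) (ZMod p) := fun x => single x 1
  have smul : ∀ x y, s x * s y = s (x + y) := fun x y => by simp [s]
  have spow : ∀ x (n : ℕ), s x ^ n = s (n * x) := fun x n => by simp [s, single_pow]
  have sco : ∀ x y, (s x).coeff y = if x = y then 1 else 0 := fun x y => by
    simp [s, Finsupp.single_apply]
  set d := ∑ x ∈ D, s x with hd
  set d' := ∑ x ∈ D, s (-x) with hd'
  have n9 : (-9 : ZMod p) ≠ 0 := by
    have : (-9 : ZMod p) = -(3 * 3) := by norm_num
    rw [this]; exact neg_ne_zero.mpr (mul_ne_zero h3 h3)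
  have himg : D.image (fun x => -9 * x) = D := by
    apply Finset.eq_of_subset_of_card_le
    · intro y hy
      obtain ⟨x, hx, rfl⟩ := Finset.mem_image.mp hy
      exact h9 x hx
    · rw [Finset.card_image_of_injective _ (mul_right_injective₀ n9)]
  have hd9 : d ^ 9 = d' := by
    have : d ^ 3 ^ 2 = ∑ x ∈ D, s x ^ 3 ^ 2 := sum_pow_char_pow 3 2 D s
    norm_num at this
    rw [this, hd']
    conv_rhs => rw [← himg]
    rw [Finset.sum_image (fun x _ y _ h => mul_right_injective₀ n9 h)]
    refine Finset.sum_congr rfl fun x _ => ?_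
    rw [spow]; congr 1; push_cast; ring
  have hd27 : d ^ 27 = ∑ x ∈ D, s (27 * x) := by
    have : d ^ 3 ^ 3 = ∑ x ∈ D, s x ^ 3 ^ 3 := sum_pow_char_pow 3 3 D s
    norm_num at this
    rw [this]
    refine Finset.sum_congr rfl fun x _ => ?_
    rw [spow]; congr 1
  have hdd : d' * d = ∑ g : ZMod p, (lam : ZMod 3) • s g := by
    rw [hd, hd', Finset.sum_mul_sum, ← Finset.sum_product']
    ext g
    have := hcount g
    simp only [smul, coeff_sum, Finsupp.finsetSum_apply, sco, coeff_smul, Finsupp.smul_apply]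
    rw [Finset.sum_boole]
    simp only [neg_add_eq_sub, this]
    simp
  have hshift : ∀ g, s g * (d' * d) = d' * d := by
    intro g
    rw [hdd, Finset.mul_sum]
    simp only [mul_smul_comm, smul]
    exact Fintype.sum_equiv (Equiv.addLeft g) _ _ (fun x => rfl)
  have hshift27 : ∀ g, s g * d ^ 27 = d ^ 27 := by
    intro g
    have e : d ^ 27 = (d' * d) * d ^ 17 := by rw [← hd9]; ring
    rw [e, ← mul_assoc, hshift]
  have n27 : (27 : ZMod p) ≠ 0 := by
    have : (27 : ZMod p) = 3 * (3 * 3) := by norm_num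
    rw [this]; exact mul_ne_zero h3 (mul_ne_zero h3 h3)
  have hco : ∀ y, (d ^ 27).coeff (27 * y) = if y ∈ D then 1 else 0 := by
    intro y
    rw [hd27]
    simp only [coeff_sum, Finsupp.finsetSum_apply, sco, mul_right_inj' n27]
    simp
  ext y
  simp only [Finset.mem_univ, iff_true]
  have h1 := hco y
  rw [← hshift27 (27 * y), hd27, Finset.mul_sum] at h1
  simp only [coeff_sum, Finsupp.finsetSum_apply, sco, smul] at h1
  by_contra hy
  simp [h0, hy, n27] at h1

theorem not_isSquare_two_zmod_three : ¬ IsSquare (2 : ZMod 3) := by decide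

theorem four_zmod_three : (4 : ZMod 3) = 1 := by decide

/-- If `p = 4q+1` with `q` odd and `3` is not a square, then `-9` is a fourth power. -/
theorem neg_nine_fourth {q p : ℕ} [Fact p.Prime] (hq : Odd q) (hp : p = 4 * q + 1)
    (h3 : ¬ IsSquare (3 : ZMod p)) : ∃ w : ZMod p, w ^ 4 = -9 := by
  have hp2 : p / 2 = 2 * q := by omega
  have h30 : (3 : ZMod p) ≠ 0 := by
    intro h; apply h3; rw [h]; exact ⟨0, by simp⟩
  obtain ⟨i, hi⟩ := (ZMod.exists_sq_eq_neg_one_iff (p := p)).mpr (by omega)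
  have hi0 : i ≠ 0 := by
    rintro rfl
    simp at hi
  have e3 : (3 : ZMod p) ^ (p / 2) = -1 := by
    rcases ZMod.pow_div_two_eq_neg_one_or_one p h30 with h | h
    · exact absurd ((ZMod.euler_criterion p h30).mpr h) h3
    · exact h
  have ei : i ^ (p / 2) = -1 := by
    rw [hp2, pow_mul, pow_two, ← hi, hq.neg_one_pow]
  obtain ⟨w, hw⟩ := (ZMod.euler_criterion p (mul_ne_zero h30 hi0)).mpr
    (by rw [mul_pow, e3, ei]; norm_num)
  refine ⟨w, ?_⟩
  calc w ^ 4 = (w * w) ^ 2 := by ring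
    _ = 9 * (i * i) := by rw [← hw]; ring
    _ = -9 := by rw [← hi]; ring

/-- Let `q > 3` be a prime with `p = 4q + 1` also prime, and let `H` be the subgroup of
quartic residues of `(ZMod p)ˣ`. Then for every nonzero `a : ZMod p`, the set
`(a·H) ∪ {0}` (viewed as a subset of `ZMod p`) is not a difference set in `ZMod p`. -/
theorem quartic_residue_coset_union_zero_not_diff_set (q p : ℕ) (hq : q.Prime) (hq3 : 3 < q)
    (hpdef : p = 4 * q + 1) (hp : p.Prime)
    (a : ZMod p) (ha : a ≠ 0) (D : Finset (ZMod p))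
    (hDdef : (D : Set (ZMod p)) =
      {x : ZMod p | ∃ u : (ZMod p)ˣ, x = a * (u : ZMod p) ^ 4} ∪ {0}) :
    ¬ ∃ lam : ℕ, IsDiffSetZMod p D lam := by
  classical
  rintro ⟨lam, -, hlam⟩
  have : Fact p.Prime := ⟨hp⟩
  have : Fact (Nat.Prime 3) := ⟨Nat.prime_three⟩
  have hmem : ∀ x, x ∈ D ↔ (∃ u : (ZMod p)ˣ, x = a * (u : ZMod p) ^ 4) ∨ x = 0 := by
    intro x
    rw [← Finset.mem_coe, hDdef]
    simp [or_comm]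
  have h0 : (0 : ZMod p) ∈ D := (hmem 0).mpr (Or.inr rfl)
  -- residues
  have hqodd : Odd q := hq.odd_of_ne_two (by omega)
  have hq3' : q % 3 = 1 := by
    have h1 : q % 3 ≠ 0 := fun h => by
      have := (Nat.prime_dvd_prime_iff_eq Nat.prime_three hq).mp (Nat.dvd_of_mod_eq_zero h)
      omega
    have h2 : q % 3 ≠ 2 := fun h => by
      have := (Nat.prime_dvd_prime_iff_eq Nat.prime_three hp).mp
        (Nat.dvd_of_mod_eq_zero (by omega))
      omega
    omega
  have h3 : ¬ IsSquare (3 : ZMod p) := by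
    have h := ZMod.exists_sq_eq_prime_iff_of_mod_four_eq_one (p := p) (q := 3)
      (by omega) (by norm_num)
    have hp3 : (p : ZMod 3) = 2 := by
      have : ((p : ℕ) : ZMod 3) = ((2 : ℕ) : ZMod 3) :=
        (ZMod.natCast_eq_natCast_iff' p 2 3).mpr (by omega)
      simpa using this
    rw [hp3] at h
    push_cast at h
    rw [h]
    exact not_isSquare_two_zmod_three
  have h30 : (3 : ZMod p) ≠ 0 := by
    intro h; apply h3; rw [h]; exact ⟨0, by simp⟩
  -- cardinality of `D`
  have hcardH : (Finset.univ.image (fun u : (ZMod p)ˣ => a * (u : ZMod p) ^ 4)).card = q := by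
    have h1 : (Finset.univ.image (fun u : (ZMod p)ˣ => a * (u : ZMod p) ^ 4)) =
        (Finset.univ.image (fun u : (ZMod p)ˣ => u ^ 4)).image
          (fun u : (ZMod p)ˣ => a * (u : ZMod p)) := by
      rw [Finset.image_image]
      congr 1
    rw [h1, Finset.card_image_of_injective _
      (fun u v h => Units.ext (mul_right_injective₀ ha h))]
    have hc : Nat.card (ZMod p)ˣ = 4 * q := by
      rw [Nat.card_eq_fintype_card, ZMod.card_units]; omega
    have h2 := IsCyclic.index_powMonoidHom_range (ZMod p)ˣ 4
    have h4 := (powMonoidHom (α := (ZMod p)ˣ) 4).range.card_mul_index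
    rw [h2, hc, Nat.gcd_eq_right (Dvd.intro q rfl)] at h4
    have h5 : Nat.card (powMonoidHom (α := (ZMod p)ˣ) 4).range =
        (Finset.univ.image (fun u : (ZMod p)ˣ => u ^ 4)).card := by
      rw [← Set.toFinset_range, ← Nat.card_eq_card_toFinset]
      rfl
    omega
  have hDeq : D = insert 0 (Finset.univ.image (fun u : (ZMod p)ˣ => a * (u : ZMod p) ^ 4)) := by
    ext x
    rw [hmem]
    simp only [Finset.mem_insert, Finset.mem_image, Finset.mem_univ, true_and]
    constructor
    · rintro (⟨u, hu⟩ | h)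
      · exact Or.inr ⟨u, hu.symm⟩
      · exact Or.inl h
    · rintro (h | ⟨u, hu⟩)
      · exact Or.inr h
      · exact Or.inl ⟨u, hu.symm⟩
  have hcard : D.card = q + 1 := by
    rw [hDeq, Finset.card_insert_of_notMem, hcardH]
    simp [ha]
  -- count at zero
  have hz : ((D ×ˢ D).filter (fun x => x.2 - x.1 = 0)).card = q + 1 := by
    rw [← hcard, ← Finset.diag_card D]
    congr 1
    ext ⟨x, y⟩
    simp only [Finset.mem_filter, Finset.mem_product, Finset.mem_diag, sub_eq_zero]
    constructor
    · rintro ⟨⟨h1, h2⟩, h3⟩; exact ⟨h1, h3.symm⟩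
    · rintro ⟨h1, rfl⟩; exact ⟨⟨h1, h1⟩, rfl⟩
  have htot : (q + 1) * (q + 1) = (q + 1) + 4 * q * lam := by
    have h1 := Finset.card_eq_sum_card_fiberwise (s := D ×ˢ D) (t := Finset.univ)
      (f := fun x => x.2 - x.1) (fun _ _ => by simp)
    rw [Finset.card_product, hcard, ← Finset.add_sum_erase _ _ (Finset.mem_univ (0 : ZMod p)),
      hz, Finset.sum_congr rfl (fun g hg => hlam g (Finset.ne_of_mem_erase hg))] at h1
    rw [h1, Finset.sum_const, Finset.card_erase_of_mem (Finset.mem_univ _), Finset.card_univ,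
      ZMod.card, smul_eq_mul, hpdef, Nat.add_sub_cancel]
  have hql : q + 1 = 4 * lam := by
    have : q * (q + 1) = q * (4 * lam) := by nlinarith
    exact Nat.eq_of_mul_eq_mul_left hq.pos this
  have huniv := aux D lam h30 (fun g => by
      by_cases hg : g = 0
      · subst hg
        rw [hz, hql]
        push_cast
        rw [four_zmod_three, one_mul]
      · rw [hlam g hg]) (fun x hx => by
      obtain ⟨w, hw⟩ := neg_nine_fourth hqodd hpdef h3
      have hw0 : w ≠ 0 := by
        rintro rfl
        have : (3 : ZMod p) * 3 = 0 := by
          have h : (-9 : ZMod p) = 0 := by rw [← hw]; simp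
          have : (3 : ZMod p) * 3 = -(-9) := by norm_num
          rw [this, h, neg_zero]
        exact mul_ne_zero h30 h30 this
      rcases (hmem x).mp hx with ⟨u, rfl⟩ | rfl
      · refine (hmem _).mpr (Or.inl ⟨Units.mk0 w hw0 * u, ?_⟩)
        push_cast
        rw [← hw, Units.val_mk0]
        ring
      · simpa using h0) h0
  rw [huniv, Finset.card_univ, ZMod.card] at hcard
  omega
end

section
/- Let p be an odd prime and let G be the dihedral group of order 2p with presentation ⟨a, b : a^p = b² = e, b a b = a⁻¹⟩. Let σ be the automorphism of G determined by σ(a) = a⁻¹ and σ(b) = b, let f : G → G be the permutation f(g) = σ(g)·b, and let ρ : G → G be the right translation ρ(g) = g·a. Then f ∘ f = id, f ∘ ρ = ρ ∘ f, and the subgroup K of Sym(G) generated by ρ and f is cyclic of order 2p and acts transitively (hence regularly) on G. -/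
open DihedralGroup

/-- Let `p` be an odd prime and `G = D_{2p}` the dihedral group of order `2p`, generated
by the rotation `a = r 1` and the reflection `b = sr 0`. Let `σ` be the automorphism of
`G` with `σ(a) = a⁻¹` and `σ(b) = b`, let `f : G → G` be the permutation
`f(g) = σ(g) * b`, and let `ρ` be the right translation `ρ(g) = g * a`. Then `f ∘ f = id`,
`f ∘ ρ = ρ ∘ f`, and the subgroup `K ≤ Sym(G)` generated by `ρ` and `f` is cyclic of
order `2p` and acts transitively (hence regularly) on `G`. -/
theorem dihedral_regular_cyclic_subgroup (p : ℕ) (hp : p.Prime) (hodd : Odd p)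
    (σ : DihedralGroup p ≃* DihedralGroup p)
    (hσa : σ (r 1) = (r 1)⁻¹) (hσb : σ (sr 0) = sr 0)
    (f ρ : Equiv.Perm (DihedralGroup p))
    (hf : ∀ g : DihedralGroup p, f g = σ g * sr 0)
    (hρ : ∀ g : DihedralGroup p, ρ g = g * r 1) :
    f * f = 1 ∧ f * ρ = ρ * f ∧
    IsCyclic (Subgroup.closure {ρ, f} : Subgroup (Equiv.Perm (DihedralGroup p))) ∧
    Nat.card (Subgroup.closure {ρ, f} : Subgroup (Equiv.Perm (DihedralGroup p))) = 2 * p ∧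
    ∀ x y : DihedralGroup p, ∃ k ∈ Subgroup.closure {ρ, f}, k x = y := by
  have : Fact p.Prime := ⟨hp⟩
  have hσr : ∀ i : ZMod p, σ (r i) = r (-i) := by
    intro i
    have h : (r i : DihedralGroup p) = (r 1) ^ i.val := by
      rw [r_one_pow, ZMod.natCast_zmod_val]
    rw [h, map_pow, hσa, inv_pow, ← h, inv_r]
  have hfr : ∀ i : ZMod p, f (r i) = sr i := by
    intro i
    rw [hf, hσr, r_mul_sr]
    simp
  have hfs : ∀ i : ZMod p, f (sr i) = r i := by
    intro i
    have h : (sr i : DihedralGroup p) = sr 0 * r i := by simp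
    rw [hf, h, map_mul, hσb, hσr]
    simp
  have hρr : ∀ i : ZMod p, ρ (r i) = r (i + 1) := by
    intro i
    rw [hρ, r_mul_r]
  have hρs : ∀ i : ZMod p, ρ (sr i) = sr (i + 1) := by
    intro i
    rw [hρ, sr_mul_r]
  have hff : f * f = 1 := by
    ext g
    rcases g with i | i <;> simp [hfr, hfs]
  have hcomm : f * ρ = ρ * f := by
    ext g
    rcases g with i | i <;> simp [hfr, hfs, hρr, hρs]
  have hpow : ∀ n : ℕ, (∀ i : ZMod p, (ρ ^ n) (r i) = r (i + (n : ZMod p))) ∧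
      ∀ i : ZMod p, (ρ ^ n) (sr i) = sr (i + (n : ZMod p)) := by
    intro n
    induction n with
    | zero => simp
    | succ n ih =>
      constructor <;> intro i
      · rw [pow_succ', Equiv.Perm.mul_apply, ih.1, hρr]
        push_cast
        rw [add_assoc]
      · rw [pow_succ', Equiv.Perm.mul_apply, ih.2, hρs]
        push_cast
        rw [add_assoc]
  have hρp : ρ ^ p = 1 := by
    ext g
    rcases g with i | i
    · rw [(hpow p).1]; simp
    · rw [(hpow p).2]; simp
  have hρ1 : ρ ≠ 1 := by
    intro h
    have h0 := hρr 0
    rw [h, Equiv.Perm.one_apply] at h0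
    injection h0 with h0
    simp at h0
  have hf1 : f ≠ 1 := by
    intro h
    have h0 := hfr 0
    rw [h, Equiv.Perm.one_apply] at h0
    injection h0
  have hoρ : orderOf ρ = p := orderOf_eq_prime hρp hρ1
  have hof : orderOf f = 2 := orderOf_eq_prime (by rw [pow_two, hff]) hf1
  have hc : Commute ρ f := hcomm.symm
  have hord : orderOf (ρ * f) = 2 * p := by
    rw [hc.orderOf_mul_eq_mul_orderOf_of_coprime, hoρ, hof, mul_comm]
    rw [hoρ, hof]
    exact hodd.coprime_two_right
  have hf2 : f ^ 2 = 1 := by rw [pow_two, hff]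
  have hfp : f ^ p = f := by
    obtain ⟨k, hk⟩ := hodd
    have h : f ^ p = f ^ (2 * k + 1) := congrArg (fun n : ℕ => f ^ n) hk
    rw [h, pow_succ, pow_mul, hf2, one_pow, one_mul]
  have hK : Subgroup.closure {ρ, f} = Subgroup.zpowers (ρ * f) := by
    apply le_antisymm
    · have hfm : f ∈ Subgroup.zpowers (ρ * f) := by
        have h : (ρ * f) ^ p = f := by rw [hc.mul_pow, hρp, hfp, one_mul]
        have h2 := Subgroup.npow_mem_zpowers (ρ * f) p
        rwa [h] at h2
      rw [Subgroup.closure_le]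
      rintro x (rfl | rfl)
      · have h := mul_mem (Subgroup.mem_zpowers (x * f)) hfm
        rwa [mul_assoc, hff, mul_one] at h
      · exact hfm
    · rw [Subgroup.zpowers_le]
      exact mul_mem (Subgroup.subset_closure (by simp)) (Subgroup.subset_closure (by simp))
  refine ⟨hff, hcomm, ?_, ?_, ?_⟩
  · rw [hK]
    infer_instance
  · rw [hK, Nat.card_zpowers, hord]
  · have hρm : ρ ∈ Subgroup.closure {ρ, f} := Subgroup.subset_closure (by simp)
    have hfm : f ∈ Subgroup.closure {ρ, f} := Subgroup.subset_closure (by simp)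
    intro x y
    rcases x with i | i <;> rcases y with j | j
    · exact ⟨ρ ^ (j - i).val, pow_mem hρm _, by rw [(hpow _).1]; simp⟩
    · exact ⟨ρ ^ (j - i).val * f, mul_mem (pow_mem hρm _) hfm, by
        rw [Equiv.Perm.mul_apply, hfr, (hpow _).2]; simp⟩
    · exact ⟨ρ ^ (j - i).val * f, mul_mem (pow_mem hρm _) hfm, by
        rw [Equiv.Perm.mul_apply, hfs, (hpow _).1]; simp⟩
    · exact ⟨ρ ^ (j - i).val, pow_mem hρm _, by rw [(hpow _).2]; simp⟩
end
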